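/- arXiv:1807.03536 — 2 statements merged into one kernel-verified Lean document; each statement's English description precedes it below -/
import Mathlib

section
/- Let Φ̊ ⊂ ℝⁿ be the root system of type C_n (n ≥ 3), let (Λ_α) be an extension datum of type (Φ̊, Y) with common values Λ_s on short and Λ_ℓ on long roots (Λ_s is then an additive subgroup of Y), and let Φ^re be the associated set of real roots. Set Γ_s = {(α, β) ∈ Φ̊_s × Φ̊_s : α + β ∈ Φ̊_ℓ}. Then Ψ ⊆ Φ^re is a maximal closed subroot system whose gradient Gr(Ψ) is a semi-closed subroot system of Φ̊ if and only if there exist a subgroup H of Λ_s of index 2 with Λ_ℓ ⊆ H and a ℤ-linear map τ : Φ̊_s → Λ_s/H satisfying τ(α) ≠ −τ(β) for all (α, β) ∈ Γ_s, such that Ψ = {α ⊕ y : α ∈ Φ̊_s, y ∈ Λ_s, y + H = τ(α)}. -/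
open scoped RealInnerProductSpace Pointwise

noncomputable section

namespace BdS

variable {V Y : Type*} [NormedAddCommGroup V] [InnerProductSpace ℝ V]
variable [AddCommGroup Y] [Module ℝ Y]

/-- `pairing β α = (β, α∨) = 2(β,α)/(α,α)`. -/
def pairing (β α : V) : ℝ := 2 * ⟪β, α⟫ / ⟪α, α⟫

/-- `reflRoot α v = s_α(v) = v − (v, α∨)α`. -/
def reflRoot (α v : V) : V := v - pairing v α • α

/-- A (finite) root system in `V`. -/
def IsRootSystem (Φ : Set V) : Prop :=
  Φ.Finite ∧ (0 : V) ∉ Φ ∧ Submodule.span ℝ Φ = ⊤ ∧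
    (∀ α ∈ Φ, ∀ β ∈ Φ, reflRoot α β ∈ Φ) ∧
    ∀ α ∈ Φ, ∀ β ∈ Φ, ∃ m : ℤ, pairing β α = (m : ℝ)

def IsReduced (Φ : Set V) : Prop :=
  ∀ α ∈ Φ, ∀ c : ℝ, c • α ∈ Φ → c • α = α ∨ c • α = -α

def IsIrreducible (Φ : Set V) : Prop :=
  ∀ Φ₁ Φ₂ : Set V, Φ = Φ₁ ∪ Φ₂ → (∀ x ∈ Φ₁, ∀ y ∈ Φ₂, ⟪x, y⟫ = 0) →
    Φ₁ = ∅ ∨ Φ₂ = ∅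

/-- divisible roots -/
def divSet (Φ : Set V) : Set V := {α ∈ Φ | (2:ℝ)⁻¹ • α ∈ Φ}
/-- non-divisible roots -/
def ndSet (Φ : Set V) : Set V := Φ \ divSet Φ
/-- short roots: non-divisible roots of non-maximal squared length -/
def shortSet (Φ : Set V) : Set V := {α ∈ ndSet Φ | ∃ β ∈ ndSet Φ, ⟪α, α⟫ < ⟪β, β⟫}
/-- long roots -/
def longSet (Φ : Set V) : Set V := ndSet Φ \ shortSet Φ

/-- An extension datum of type `(Φ, Y)`. -/
def IsExtensionDatum (Φ : Set V) (Λ : V → Set Y) : Prop :=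
  (∀ α ∈ Φ, ∀ β ∈ Φ, ∀ z ∈ Λ α, ∀ y ∈ Λ β, y - pairing β α • z ∈ Λ (reflRoot α β)) ∧
  (0 : Y) ∈ Λ 0 ∧
  (∀ α ∈ ndSet Φ, (0 : Y) ∈ Λ α) ∧
  (∀ α ∈ divSet Φ, (Λ α).Nonempty) ∧
  Submodule.span ℝ (⋃ α ∈ insert (0 : V) Φ, Λ α) = ⊤

/-- subroot system of a finite root system -/
def IsSubRS (Φ Δ : Set V) : Prop :=
  Δ.Nonempty ∧ Δ ⊆ Φ ∧ ∀ α ∈ Δ, ∀ β ∈ Δ, reflRoot α β ∈ Δ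

def IsClosedSubRS (Φ Δ : Set V) : Prop :=
  IsSubRS Φ Δ ∧ ∀ α ∈ Δ, ∀ β ∈ Δ, α + β ∈ Φ → α + β ∈ Δ

def IsMaxClosedSubRS (Φ Δ : Set V) : Prop :=
  IsClosedSubRS Φ Δ ∧ Δ ≠ Φ ∧
    ∀ Δ' : Set V, IsClosedSubRS Φ Δ' → Δ' ≠ Φ → Δ ⊆ Δ' → Δ' = Δ

/-- semi-closed subroot system, relative to given short/long/divisible parts -/
def IsSemiClosedSubRS (Φ Φs Φl Φd Δ : Set V) : Prop :=
  IsSubRS Φ Δ ∧ ¬ (∀ α ∈ Δ, ∀ β ∈ Δ, α + β ∈ Φ → α + β ∈ Δ) ∧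
    ∀ α ∈ Δ, ∀ β ∈ Δ, α + β ∈ Φ → α + β ∉ Δ →
      (α ∈ Φs ∧ β ∈ Φs ∧ α + β ∈ Φl ∪ Φd) ∨ (α ∈ Φl ∧ β ∈ Φl ∧ α + β ∈ Φd)

def IsMaxSemiClosedSubRS (Φ Φs Φl Φd Δ : Set V) : Prop :=
  IsSemiClosedSubRS Φ Φs Φl Φd Δ ∧
    ∀ Δ' : Set V, IsClosedSubRS Φ Δ' → Δ' ≠ Φ → ¬ Δ ⊂ Δ'

/-- the set of real roots attached to an extension datum -/
def PhiRe (Φ : Set V) (Λ : V → Set Y) : Set (V × Y) := {x | x.1 ∈ Φ ∧ x.2 ∈ Λ x.1}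

/-- affine reflection `s_{α ⊕ y}(β ⊕ z) = s_α(β) ⊕ (z − (β,α∨)y)` -/
def reflAff (a x : V × Y) : V × Y := (reflRoot a.1 x.1, x.2 - pairing x.1 a.1 • a.2)

/-- subroot system of a set of real roots `R` -/
def IsSubSys (R Ψ : Set (V × Y)) : Prop :=
  Ψ.Nonempty ∧ Ψ ⊆ R ∧ Ψ ≠ R ∧ ∀ a ∈ Ψ, ∀ x ∈ Ψ, reflAff a x ∈ Ψ

def IsClosedSubSys (R Ψ : Set (V × Y)) : Prop :=
  IsSubSys R Ψ ∧ ∀ x ∈ Ψ, ∀ y ∈ Ψ, x + y ∈ R → x + y ∈ Ψ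

def IsMaxClosedSubSys (R Ψ : Set (V × Y)) : Prop :=
  IsClosedSubSys R Ψ ∧ ∀ Ψ' : Set (V × Y), IsClosedSubSys R Ψ' → Ψ ⊆ Ψ' → Ψ' = Ψ

/-- gradient of a subroot system -/
def Gr (Ψ : Set (V × Y)) : Set V := {α | ∃ y : Y, (α, y) ∈ Ψ}

def Zset (Ψ : Set (V × Y)) (α : V) : Set Y := {y | (α, y) ∈ Ψ}

abbrev E (n : ℕ) := EuclideanSpace ℝ (Fin n)

def eps {n : ℕ} (i : Fin n) : E n := EuclideanSpace.single i 1

def shortBC (n : ℕ) : Set (E n) := {v | ∃ i : Fin n, v = eps i ∨ v = -eps i}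

def longBC (n : ℕ) : Set (E n) :=
  {v | ∃ i j : Fin n, i ≠ j ∧ ∃ c d : ℝ, (c = 1 ∨ c = -1) ∧ (d = 1 ∨ d = -1) ∧
    v = c • eps i + d • eps j}

def divBC (n : ℕ) : Set (E n) :=
  {v | ∃ i : Fin n, v = (2:ℝ) • eps i ∨ v = -((2:ℝ) • eps i)}

def BCn (n : ℕ) : Set (E n) := shortBC n ∪ longBC n ∪ divBC n
def Bn (n : ℕ) : Set (E n) := shortBC n ∪ longBC n
def Cn (n : ℕ) : Set (E n) := longBC n ∪ divBC n


/-! ### Basic facts on the root system of type `C_n` -/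

theorem inner_eps {n : ℕ} (v : E n) (i : Fin n) : ⟪v, eps i⟫ = v i := by
  simp [eps, EuclideanSpace.inner_single_right]

theorem eps_apply {n : ℕ} (i k : Fin n) : (eps i : E n) k = if k = i then 1 else 0 := by
  simp [eps]

theorem pairing_long {n : ℕ} {i j : Fin n} (hij : i ≠ j) {c d : ℝ} (hc : c = 1 ∨ c = -1)
    (hd : d = 1 ∨ d = -1) (v : E n) : pairing v (c • eps i + d • eps j) = c * v i + d * v j := by
  have h1 : ⟪v, c • eps i + d • eps j⟫ = c * v i + d * v j := by
    rw [inner_add_right, inner_smul_right, inner_smul_right, inner_eps, inner_eps]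
  have h2 : ⟪(c • eps i + d • eps j : E n), c • eps i + d • eps j⟫ = 2 := by
    rw [inner_add_right, inner_smul_right, inner_smul_right, inner_eps, inner_eps]
    have := hij.symm
    rcases hc with rfl | rfl <;> rcases hd with rfl | rfl <;> simp [eps_apply, *] <;> norm_num
  unfold pairing
  rw [h1, h2]; ring

theorem pairing_div {n : ℕ} (i : Fin n) {c : ℝ} (hc : c = 1 ∨ c = -1)
    (v : E n) : pairing v ((2 * c) • eps i) = c * v i := by
  have h1 : ⟪v, (2 * c) • eps i⟫ = 2 * c * v i := by
    rw [inner_smul_right, inner_eps]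
  have h2 : ⟪((2 * c) • eps i : E n), (2 * c) • eps i⟫ = 4 := by
    rw [inner_smul_right, inner_eps]
    rcases hc with rfl | rfl <;> simp [eps_apply] <;> norm_num
  unfold pairing
  rw [h1, h2]; ring

theorem mem_div_iff {n : ℕ} {v : E n} :
    v ∈ divBC n ↔ ∃ (i : Fin n) (c : ℝ), (c = 1 ∨ c = -1) ∧ v = (2 * c) • eps i := by
  constructor
  · rintro ⟨i, rfl | rfl⟩
    · exact ⟨i, 1, Or.inl rfl, by simp⟩
    · exact ⟨i, -1, Or.inr rfl, by simp⟩
  · rintro ⟨i, c, rfl | rfl, rfl⟩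
    · exact ⟨i, Or.inl (by simp)⟩
    · exact ⟨i, Or.inr (by simp)⟩

theorem mem_long {n : ℕ} {i j : Fin n} (hij : i ≠ j) {c d : ℝ} (hc : c = 1 ∨ c = -1)
    (hd : d = 1 ∨ d = -1) : (c • eps i + d • eps j : E n) ∈ longBC n :=
  ⟨i, j, hij, c, d, hc, hd, rfl⟩

theorem sgn_neg {c : ℝ} (hc : c = 1 ∨ c = -1) : -c = 1 ∨ -c = -1 := by
  rcases hc with rfl | rfl <;> simp

theorem sgn_mul {c d : ℝ} (hc : c = 1 ∨ c = -1) (hd : d = 1 ∨ d = -1) :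
    c * d = 1 ∨ c * d = -1 := by
  rcases hc with rfl | rfl <;> rcases hd with rfl | rfl <;> simp

theorem Cn_int {n : ℕ} {v : E n} (hv : v ∈ Cn n) (k : Fin n) : ∃ m : ℤ, v k = m := by
  have key : ∀ c : ℝ, (c = 1 ∨ c = -1) → ∀ i : Fin n, ∃ m : ℤ, c * (eps i : E n) k = m := by
    intro c hc i
    rw [eps_apply]
    rcases hc with rfl | rfl <;> split_ifs
    · exact ⟨1, by simp⟩
    · exact ⟨0, by simp⟩
    · exact ⟨-1, by simp⟩
    · exact ⟨0, by simp⟩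
  rcases hv with ⟨i, j, hij, c, d, hc, hd, rfl⟩ | hv
  · obtain ⟨a, ha⟩ := key c hc i
    obtain ⟨b, hb⟩ := key d hd j
    refine ⟨a + b, ?_⟩
    simp only [PiLp.add_apply, PiLp.smul_apply, smul_eq_mul, Int.cast_add]
    rw [ha, hb]
  · obtain ⟨i, c, hc, rfl⟩ := mem_div_iff.1 hv
    obtain ⟨a, ha⟩ := key c hc i
    refine ⟨2 * a, ?_⟩
    simp only [PiLp.smul_apply, smul_eq_mul, Int.cast_mul]
    rw [← ha]; push_cast; ring

theorem pairing_int {n : ℕ} {α β : E n} (hα : α ∈ Cn n) (hβ : β ∈ Cn n) :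
    ∃ m : ℤ, pairing β α = m := by
  rcases hα with ⟨i, j, hij, c, d, hc, hd, rfl⟩ | hα
  · rw [pairing_long hij hc hd]
    obtain ⟨a, ha⟩ := Cn_int hβ i
    obtain ⟨b, hb⟩ := Cn_int hβ j
    rw [ha, hb]
    rcases hc with rfl | rfl <;> rcases hd with rfl | rfl
    · exact ⟨a + b, by push_cast; ring⟩
    · exact ⟨a - b, by push_cast; ring⟩
    · exact ⟨b - a, by push_cast; ring⟩
    · exact ⟨-a - b, by push_cast; ring⟩
  · obtain ⟨i, c, hc, rfl⟩ := mem_div_iff.1 hα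
    rw [pairing_div i hc]
    obtain ⟨a, ha⟩ := Cn_int hβ i
    rw [ha]
    rcases hc with rfl | rfl
    · exact ⟨a, by simp⟩
    · exact ⟨-a, by simp⟩

theorem refl_lin {n : ℕ} (α u v : E n) (c d : ℝ) :
    reflRoot α (c • u + d • v) = c • reflRoot α u + d • reflRoot α v := by
  unfold reflRoot pairing
  rw [inner_add_left, inner_smul_left, inner_smul_left]
  simp only [RCLike.conj_to_real, smul_sub, smul_smul]
  rw [show 2 * (c * ⟪u, α⟫ + d * ⟪v, α⟫) / ⟪α, α⟫
    = c * (2 * ⟪u, α⟫ / ⟪α, α⟫) + d * (2 * ⟪v, α⟫ / ⟪α, α⟫) by ring, add_smul]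
  abel

theorem refl_eps {n : ℕ} {α : E n} (hα : α ∈ Cn n) :
    ∃ (π : Equiv.Perm (Fin n)) (s : Fin n → ℝ), (∀ k, s k = 1 ∨ s k = -1) ∧
      ∀ k, reflRoot α (eps k) = s k • eps (π k) := by
  rcases hα with ⟨i, j, hij, c, d, hc, hd, rfl⟩ | hα
  · refine ⟨Equiv.swap i j, fun k => if k = i ∨ k = j then -(c * d) else 1, ?_, ?_⟩
    · intro k
      dsimp only
      split_ifs
      · exact sgn_neg (sgn_mul hc hd)
      · exact Or.inl rfl
    · intro k
      unfold reflRoot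
      rw [pairing_long hij hc hd]
      have hji := hij.symm
      by_cases h1 : k = i
      · subst h1
        simp only [eps_apply, hji, Equiv.swap_apply_left, true_or, if_true, if_false]
        rcases hc with rfl | rfl <;> rcases hd with rfl | rfl <;> simp
      · by_cases h2 : k = j
        · subst h2
          simp only [eps_apply, hij, Equiv.swap_apply_right, or_true, if_true, if_false]
          rcases hc with rfl | rfl <;> rcases hd with rfl | rfl <;> simp
        · rw [Equiv.swap_apply_of_ne_of_ne h1 h2]
          simp [eps_apply, h1, h2, Ne.symm h1, Ne.symm h2]
  · obtain ⟨i, c, hc, rfl⟩ := mem_div_iff.1 hα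
    refine ⟨Equiv.refl _, fun k => if k = i then -1 else 1, ?_, ?_⟩
    · intro k
      dsimp only
      split_ifs <;> simp
    · intro k
      unfold reflRoot
      rw [pairing_div i hc]
      by_cases h1 : k = i
      · subst h1
        simp only [eps_apply, if_true, Equiv.refl_apply, smul_smul]
        have : (c * 1 * (2 * c)) = 2 := by rcases hc with rfl | rfl <;> norm_num
        rw [this, two_smul]
        simp
      · simp [eps_apply, h1, Ne.symm h1]

theorem refl_long {n : ℕ} {α β : E n} (hα : α ∈ Cn n) (hβ : β ∈ longBC n) :
    reflRoot α β ∈ longBC n := by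
  obtain ⟨π, s, hs, h⟩ := refl_eps hα
  obtain ⟨i, j, hij, c, d, hc, hd, rfl⟩ := hβ
  rw [refl_lin, h, h, smul_smul, smul_smul]
  exact mem_long (fun e => hij (π.injective e)) (sgn_mul hc (hs i)) (sgn_mul hd (hs j))

theorem refl_div {n : ℕ} {α β : E n} (hα : α ∈ Cn n) (hβ : β ∈ divBC n) :
    reflRoot α β ∈ divBC n := by
  obtain ⟨π, s, hs, h⟩ := refl_eps hα
  obtain ⟨i, c, hc, rfl⟩ := mem_div_iff.1 hβ
  have := refl_lin α (eps i) 0 (2 * c) 0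
  simp only [smul_zero, add_zero, zero_smul] at this
  rw [this, h, smul_smul, mul_assoc]
  exact mem_div_iff.2 ⟨π i, _, sgn_mul hc (hs i), rfl⟩

theorem refl_Cn {n : ℕ} {α β : E n} (hα : α ∈ Cn n) (hβ : β ∈ Cn n) :
    reflRoot α β ∈ Cn n :=
  hβ.elim (fun h => Or.inl (refl_long hα h)) (fun h => Or.inr (refl_div hα h))

theorem long_not_div {n : ℕ} {v : E n} (h1 : v ∈ longBC n) (h2 : v ∈ divBC n) : False := by
  obtain ⟨i, j, hij, c, d, hc, hd, rfl⟩ := h1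
  obtain ⟨k, e, he, h⟩ := mem_div_iff.1 h2
  have hi := congrArg (fun v : E n => v i) h
  have hj := congrArg (fun v : E n => v j) h
  have hji := hij.symm
  simp only [PiLp.add_apply, PiLp.smul_apply, smul_eq_mul, eps_apply, hij, hji, if_true,
    if_false] at hi hj
  by_cases h3 : i = k
  · subst h3
    simp only [hji, if_false] at hj
    rcases hd with rfl | rfl <;> norm_num at hj
  · simp only [h3, if_false] at hi
    rcases hc with rfl | rfl <;> norm_num at hi

theorem long_neg {n : ℕ} {v : E n} (h : v ∈ longBC n) : -v ∈ longBC n := by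
  obtain ⟨i, j, hij, c, d, hc, hd, rfl⟩ := h
  exact ⟨i, j, hij, -c, -d, sgn_neg hc, sgn_neg hd, by simp only [neg_smul]; abel⟩

theorem refl_self {n : ℕ} {v : E n} (h : v ∈ Cn n) : pairing v v = 2 ∧ reflRoot v v = -v := by
  have h2 : pairing v v = 2 := by
    rcases h with ⟨i, j, hij, c, d, hc, hd, rfl⟩ | h
    · rw [pairing_long hij hc hd]
      have hji := hij.symm
      rcases hc with rfl | rfl <;> rcases hd with rfl | rfl <;> simp [eps_apply, *] <;> norm_num
    · obtain ⟨i, c, hc, rfl⟩ := mem_div_iff.1 h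
      rw [pairing_div i hc]
      rcases hc with rfl | rfl <;> simp [eps_apply]
  refine ⟨h2, ?_⟩
  unfold reflRoot
  rw [h2, two_smul]; abel

theorem exists_third {n : ℕ} (hn : 3 ≤ n) (i j : Fin n) : ∃ k, k ≠ i ∧ k ≠ j := by
  have : ∃ k : Fin n, k ∉ ({i, j} : Finset (Fin n)) := by
    by_contra! h
    have h1 : (Finset.univ : Finset (Fin n)) ⊆ {i, j} := fun x _ => h x
    have h2 := Finset.card_le_card h1
    have h3 := Finset.card_le_two (a := i) (b := j)
    simp at h2
    omega
  obtain ⟨k, hk⟩ := this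
  simp at hk
  exact ⟨k, hk⟩

/-- Connectedness of the short roots (a root system of type `D_n`). -/
theorem long_conn {n : ℕ} (hn : 3 ≤ n) (P : E n → Prop)
    (hP : ∀ α ∈ longBC n, ∀ β ∈ longBC n, β - α ∈ longBC n → P α → P β)
    {α β : E n} (hα : α ∈ longBC n) (hβ : β ∈ longBC n) (h : P α) : P β := by
  have s1 : ∀ i j k : Fin n, i ≠ j → i ≠ k → j ≠ k → ∀ c d e : ℝ, (c = 1 ∨ c = -1) →
      (d = 1 ∨ d = -1) → (e = 1 ∨ e = -1) → P (c • eps i + d • eps j) →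
      P (c • eps i + e • eps k) := by
    intro i j k hij hik hjk c d e hc hd he hp
    refine hP _ (mem_long hij hc hd) _ (mem_long hik hc he) ?_ hp
    have : (c • eps i + e • eps k - (c • eps i + d • eps j) : E n)
        = e • eps k + (-d) • eps j := by rw [neg_smul]; abel
    rw [this]
    exact mem_long hjk.symm he (sgn_neg hd)
  have s2 : ∀ i j k : Fin n, i ≠ j → i ≠ k → ∀ c d e : ℝ, (c = 1 ∨ c = -1) →
      (d = 1 ∨ d = -1) → (e = 1 ∨ e = -1) → P (c • eps i + d • eps j) →
      P (c • eps i + e • eps k) := by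
    intro i j k hij hik c d e hc hd he hp
    by_cases hjk : j = k
    · subst hjk
      obtain ⟨l, hl1, hl2⟩ := exists_third hn i j
      exact s1 i l j hl1.symm hij hl2 c 1 e hc (Or.inl rfl) he
        (s1 i j l hij hl1.symm hl2.symm c d 1 hc hd (Or.inl rfl) hp)
    · exact s1 i j k hij hik hjk c d e hc hd he hp
  have s3 : ∀ i j k l : Fin n, i ≠ j → k ≠ l → k ≠ i → ∀ c d e f : ℝ, (c = 1 ∨ c = -1) →
      (d = 1 ∨ d = -1) → (e = 1 ∨ e = -1) → (f = 1 ∨ f = -1) → P (c • eps i + d • eps j) →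
      P (e • eps k + f • eps l) := by
    intro i j k l hij hkl hki c d e f hc hd he hf hp
    have h1 := s2 i j k hij hki.symm c d e hc hd he hp
    rw [add_comm] at h1
    exact s2 k i l hki hkl e c f he hc hf h1
  obtain ⟨i, j, hij, c, d, hc, hd, rfl⟩ := hα
  obtain ⟨k, l, hkl, e, f, he, hf, rfl⟩ := hβ
  by_cases hki : k = i
  · subst hki
    have := s3 k j l k hij hkl.symm hkl.symm c d f e hc hd hf he h
    rwa [add_comm] at this
  · exact s3 i j k l hij hkl hki c d e f hc hd he hf h

theorem long_adj {n : ℕ} (hn : 3 ≤ n) {β : E n} (hβ : β ∈ longBC n) :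
    ∃ α ∈ longBC n, β - α ∈ longBC n := by
  obtain ⟨i, j, hij, c, d, hc, hd, rfl⟩ := hβ
  obtain ⟨k, hki, hkj⟩ := exists_third hn i j
  refine ⟨c • eps i + (-1 : ℝ) • eps k, mem_long hki.symm hc (Or.inr rfl), ?_⟩
  have : (c • eps i + d • eps j - (c • eps i + (-1 : ℝ) • eps k) : E n)
      = d • eps j + (1 : ℝ) • eps k := by rw [neg_smul]; abel
  rw [this]
  exact mem_long hkj.symm hd (Or.inl rfl)

/-- A long root is a sum of two short roots. -/
theorem div_split {n : ℕ} (hn : 3 ≤ n) {β : E n} (hβ : β ∈ divBC n) :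
    ∃ α ∈ longBC n, ∃ γ ∈ longBC n, β = α + γ ∧ β - α ∈ longBC n := by
  obtain ⟨i, c, hc, rfl⟩ := mem_div_iff.1 hβ
  obtain ⟨k, hki, -⟩ := exists_third hn i i
  have e : ((2 * c) • eps i : E n) =
    (c • eps i + (1 : ℝ) • eps k) + (c • eps i + (-1 : ℝ) • eps k) := by
    rw [neg_smul, mul_smul, two_smul]; abel
  refine ⟨c • eps i + (1 : ℝ) • eps k, mem_long hki.symm hc (Or.inl rfl),
    c • eps i + (-1 : ℝ) • eps k, mem_long hki.symm hc (Or.inr rfl), e, ?_⟩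
  rw [e, add_sub_cancel_left]
  exact mem_long hki.symm hc (Or.inr rfl)

theorem Cn_sub_closure {n : ℕ} (hn : 3 ≤ n) {v : E n} (hv : v ∈ Cn n) :
    v ∈ AddSubgroup.closure (longBC n) := by
  rcases hv with h | h
  · exact AddSubgroup.subset_closure h
  · obtain ⟨α, hα, γ, hγ, rfl, -⟩ := div_split hn h
    exact add_mem (AddSubgroup.subset_closure hα) (AddSubgroup.subset_closure hγ)

theorem ED_refl {Y : Type*} [AddCommGroup Y] [Module ℝ Y] {n : ℕ} {Λ : E n → Set Y}
    (hED : IsExtensionDatum (Cn n) Λ) {a x : E n × Y} (ha : a ∈ PhiRe (Cn n) Λ)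
    (hx : x ∈ PhiRe (Cn n) Λ) : reflAff a x ∈ PhiRe (Cn n) Λ :=
  ⟨refl_Cn ha.1 hx.1, hED.1 _ ha.1 _ hx.1 _ ha.2 _ hx.2⟩

theorem ED_zero {Y : Type*} [AddCommGroup Y] [Module ℝ Y] {n : ℕ} {Λ : E n → Set Y}
    (hED : IsExtensionDatum (Cn n) Λ) {α : E n} (hα : α ∈ Cn n) : (0 : Y) ∈ Λ α := by
  refine hED.2.2.1 α ⟨hα, fun h => ?_⟩
  have h2 := h.2
  have hk : ∀ k, ∃ m : ℤ, α k = 2 * m := by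
    intro k
    obtain ⟨m, hm⟩ := Cn_int h2 k
    refine ⟨m, ?_⟩
    rw [← hm]; simp
  rcases hα with ⟨i, j, hij, c, d, hc, hd, rfl⟩ | hα
  · obtain ⟨m, hm⟩ := hk i
    simp [eps_apply, hij] at hm
    rcases hc with rfl | rfl
    · have : (1 : ℤ) = 2 * m := by exact_mod_cast hm
      omega
    · have : (-1 : ℤ) = 2 * m := by exact_mod_cast hm
      omega
  · obtain ⟨i, c, hc, rfl⟩ := mem_div_iff.1 hα
    have e : ((2 : ℝ)⁻¹ • (2 * c) • eps i : E n) = c • eps i := by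
      rw [smul_smul]; congr 1; ring
    rw [e] at h2
    rcases h2 with ⟨k, l, hkl, a, b, ha, hb, h3⟩ | h2
    · have h4 := congrArg (fun v : E n => v k) h3
      have h5 := congrArg (fun v : E n => v l) h3
      have hlk := hkl.symm
      simp [eps_apply, hkl, hlk] at h4 h5
      by_cases hki : k = i
      · have hli : l ≠ i := fun h => hkl (hki.trans h.symm)
        simp [hli] at h5
        rcases hb with rfl | rfl <;> norm_num at h5
      · simp [hki] at h4
        rcases ha with rfl | rfl <;> norm_num at h4
    · obtain ⟨k, b, hb, h3⟩ := mem_div_iff.1 h2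
      have h4 := congrArg (fun v : E n => v k) h3
      simp [eps_apply] at h4
      split_ifs at h4 <;> rcases hb with rfl | rfl <;> rcases hc with rfl | rfl <;>
        norm_num at h4

/-- The part of the real roots lying in a subgroup is a closed subroot system. -/
theorem closed_inter {Y : Type*} [AddCommGroup Y] [Module ℝ Y] {n : ℕ} {Λ : E n → Set Y}
    (hED : IsExtensionDatum (Cn n) Λ) (L : AddSubgroup (E n × Y))
    (h1 : (PhiRe (Cn n) Λ ∩ L).Nonempty) (h2 : PhiRe (Cn n) Λ ∩ L ≠ PhiRe (Cn n) Λ) :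
    IsClosedSubSys (PhiRe (Cn n) Λ) (PhiRe (Cn n) Λ ∩ L) := by
  refine ⟨⟨h1, Set.inter_subset_left, h2, ?_⟩, ?_⟩
  · rintro a ⟨ha, haL⟩ x ⟨hx, hxL⟩
    refine ⟨ED_refl hED ha hx, ?_⟩
    obtain ⟨m, hm⟩ := pairing_int ha.1 hx.1
    have : reflAff a x = x - m • a := by
      ext1
      · simp [reflAff, reflRoot, hm, Int.cast_smul_eq_zsmul]
      · simp [reflAff, hm, Int.cast_smul_eq_zsmul]
    rw [this]
    exact sub_mem hxL (zsmul_mem haL m)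
  · rintro x ⟨_, hx⟩ y ⟨_, hy⟩ h
    exact ⟨h, add_mem hx hy⟩

/-! ### The subgroup attached to `(K, τ)` and the backward direction -/

def Lsub {Y : Type*} [AddCommGroup Y] {n : ℕ} (K : AddSubgroup Y)
    (τ : AddSubgroup.closure (longBC n) →+ Y) : AddSubgroup (E n × Y) where
  carrier := {x | ∃ h : x.1 ∈ AddSubgroup.closure (longBC n), x.2 - τ ⟨x.1, h⟩ ∈ K}
  zero_mem' := ⟨zero_mem _, by
    have : (⟨(0 : E n × Y).1, zero_mem _⟩ : AddSubgroup.closure (longBC n)) = 0 := rfl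
    rw [this, map_zero]; simp⟩
  add_mem' := by
    rintro x y ⟨hx, hx'⟩ ⟨hy, hy'⟩
    refine ⟨add_mem hx hy, ?_⟩
    have : (⟨(x + y).1, add_mem hx hy⟩ : AddSubgroup.closure (longBC n))
      = ⟨x.1, hx⟩ + ⟨y.1, hy⟩ := rfl
    rw [this, map_add, Prod.snd_add, add_sub_add_comm]
    exact add_mem hx' hy'
  neg_mem' := by
    rintro x ⟨hx, hx'⟩
    refine ⟨neg_mem hx, ?_⟩
    have : (⟨(-x).1, neg_mem hx⟩ : AddSubgroup.closure (longBC n)) = -⟨x.1, hx⟩ := rfl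
    rw [this, map_neg, Prod.snd_neg, neg_sub_neg, ← neg_sub]
    exact neg_mem hx'

theorem mem_Lsub {Y : Type*} [AddCommGroup Y] {n : ℕ} {K : AddSubgroup Y}
    {τ : AddSubgroup.closure (longBC n) →+ Y} {v : E n}
    (hv : v ∈ AddSubgroup.closure (longBC n)) {y : Y} :
    (v, y) ∈ Lsub K τ ↔ y - τ ⟨v, hv⟩ ∈ K :=
  ⟨fun h => h.2, fun h => ⟨hv, h⟩⟩

/-- In a subgroup of index two, a sum of two non-members is a member. -/
theorem idx2_sub {Y : Type*} [AddCommGroup Y] {H Λs : AddSubgroup Y}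
    (hi : (H.addSubgroupOf Λs).index = 2) {a b : Y} (ha : a ∈ Λs) (hb : b ∈ Λs)
    (ha' : a ∉ H) (hb' : b ∉ H) : a - b ∈ H := by
  have hb'' : -b ∉ H := fun h => hb' (by simpa using neg_mem h)
  have := AddSubgroup.add_mem_iff_of_index_two hi (a := ⟨a, ha⟩) (b := ⟨-b, neg_mem hb⟩)
  simp only [AddSubgroup.mem_addSubgroupOf, AddSubgroup.coe_add] at this
  rw [sub_eq_add_neg]
  exact this.2 (by simp [ha', hb''])

theorem semi_long {n : ℕ} (hn : 3 ≤ n) :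
    IsSemiClosedSubRS (Cn n) (longBC n) (divBC n) ∅ (longBC n) := by
  have i0 : Fin n := ⟨0, by omega⟩
  have hd : ((2 * 1 : ℝ) • eps i0 : E n) ∈ divBC n := mem_div_iff.2 ⟨i0, 1, Or.inl rfl, rfl⟩
  obtain ⟨α, hα, γ, hγ, e, -⟩ := div_split hn hd
  refine ⟨⟨⟨α, hα⟩, fun x hx => Or.inl hx, fun a ha b hb => refl_long (Or.inl ha) hb⟩, ?_, ?_⟩
  · intro h
    have := h α hα γ hγ (e ▸ Or.inr hd)
    rw [← e] at this
    exact long_not_div this hd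
  · intro a ha b hb hab hab'
    refine Or.inl ⟨ha, hb, Or.inl ?_⟩
    exact hab.resolve_left hab'

theorem backward {Y : Type*} [AddCommGroup Y] [Module ℝ Y]
    {n : ℕ} (hn : 3 ≤ n) (Λ : E n → Set Y) (Λs : AddSubgroup Y) (Λl : Set Y)
    (hED : IsExtensionDatum (Cn n) Λ)
    (hs : ∀ α ∈ longBC n, Λ α = (Λs : Set Y)) (hl : ∀ α ∈ divBC n, Λ α = Λl)
    (Ψ : Set (E n × Y)) (H : AddSubgroup Y) (τ : AddSubgroup.closure (longBC n) →+ Y)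
    (hH : H ≤ Λs) (hi : (H.addSubgroupOf Λs).index = 2) (hlH : Λl ⊆ (H : Set Y))
    (hτ : ∀ x, τ x ∈ Λs)
    (hsum : ∀ (α β : E n) (hα : α ∈ longBC n) (hβ : β ∈ longBC n), α + β ∈ divBC n →
          τ ⟨α, AddSubgroup.subset_closure hα⟩ +
            τ ⟨β, AddSubgroup.subset_closure hβ⟩ ∉ H)
    (hΨ : Ψ = {x | ∃ h : x.1 ∈ longBC n,
          x.2 ∈ Λs ∧ x.2 - τ ⟨x.1, AddSubgroup.subset_closure h⟩ ∈ H}) :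
    IsMaxClosedSubSys (PhiRe (Cn n) Λ) Ψ ∧
        IsSemiClosedSubRS (Cn n) (longBC n) (divBC n) ∅ (Gr Ψ) := by
  classical
  set t : E n → Y := fun v =>
    if h : v ∈ AddSubgroup.closure (longBC n) then τ ⟨v, h⟩ else 0 with ht
  have t_eq : ∀ v (h : v ∈ AddSubgroup.closure (longBC n)), τ ⟨v, h⟩ = t v := by
    intro v h
    simp [ht, h]
  have t_add : ∀ u ∈ AddSubgroup.closure (longBC n), ∀ v ∈ AddSubgroup.closure (longBC n),
      t (u + v) = t u + t v := by
    intro u hu v hv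
    rw [← t_eq u hu, ← t_eq v hv, ← t_eq _ (add_mem hu hv), ← map_add]
    rfl
  have sc : ∀ {v : E n}, v ∈ longBC n → v ∈ AddSubgroup.closure (longBC n) :=
    fun h => AddSubgroup.subset_closure h
  have t_sub : ∀ u ∈ longBC n, ∀ v ∈ longBC n, t (u - v) = t u - t v := by
    intro u hu v hv
    have := t_add (u - v) (sub_mem (sc hu) (sc hv)) v (sc hv)
    rw [sub_add_cancel] at this
    rw [this]; abel
  have t_mem : ∀ v, t v ∈ Λs := by
    intro v
    simp only [ht]
    split_ifs
    · exact hτ _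
    · exact zero_mem _
  have t_sum : ∀ α ∈ longBC n, ∀ β ∈ longBC n, α + β ∈ divBC n → t α + t β ∉ H := by
    intro α hα β hβ h
    have := hsum α β hα hβ h
    rwa [t_eq, t_eq] at this
  have memΨ : ∀ α ∈ longBC n, ∀ y ∈ Λs, y - t α ∈ H → (α, y) ∈ Ψ := by
    intro α hα y hy h
    rw [hΨ]
    refine ⟨hα, hy, ?_⟩
    rw [t_eq]; exact h
  have e1 : Ψ = PhiRe (Cn n) Λ ∩ Lsub H τ := by
    ext x
    constructor
    · intro hx
      rw [hΨ] at hx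
      obtain ⟨h1, h2, h3⟩ := hx
      exact ⟨⟨Or.inl h1, by rw [hs _ h1]; exact h2⟩, sc h1, h3⟩
    · rintro ⟨⟨h1 | h1, h2⟩, h3, h4⟩
      · rw [hs _ h1] at h2
        rw [hΨ]
        exact ⟨h1, h2, h4⟩
      · exfalso
        rw [hl _ h1] at h2
        obtain ⟨α, hα, γ, hγ, e, -⟩ := div_split hn h1
        have h5 := t_sum α hα γ hγ (e ▸ h1)
        rw [← t_add α (sc hα) γ (sc hγ), ← e] at h5
        rw [t_eq] at h4
        apply h5
        have := sub_mem (hlH h2) h4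
        simpa using this
  have hne : ∀ α ∈ longBC n, (α, t α) ∈ Ψ := fun α hα =>
    memΨ α hα _ (t_mem α) (by simp)
  have i0 : Fin n := ⟨0, by omega⟩
  have hdiv : ((2 * 1 : ℝ) • eps i0 : E n) ∈ divBC n := mem_div_iff.2 ⟨i0, 1, Or.inl rfl, rfl⟩
  obtain ⟨α0, hα0, -⟩ := div_split hn hdiv
  have hprop : Ψ ≠ PhiRe (Cn n) Λ := by
    intro h
    have : (((2 * 1 : ℝ) • eps i0 : E n), (0 : Y)) ∈ Ψ := by
      rw [h]; exact ⟨Or.inr hdiv, ED_zero hED (Or.inr hdiv)⟩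
    rw [hΨ] at this
    exact long_not_div this.1 hdiv
  have hGr : Gr Ψ = longBC n := by
    ext v
    constructor
    · rintro ⟨y, hy⟩
      rw [hΨ] at hy
      exact hy.1
    · intro hv
      exact ⟨_, hne v hv⟩
  refine ⟨⟨?_, ?_⟩, by rw [hGr]; exact semi_long hn⟩
  · rw [e1]
    rw [e1] at hprop hne
    exact closed_inter hED _ ⟨_, hne α0 hα0⟩ hprop
  · intro Ψ' hΨ' hsub
    by_contra hneq
    have hR := hΨ'.1.2.1
    have hadd : ∀ α y β z, (α, y) ∈ Ψ' → (β, z) ∈ Ψ' → (α + β, y + z) ∈ PhiRe (Cn n) Λ →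
        (α + β, y + z) ∈ Ψ' := fun α y β z h1 h2 h3 => hΨ'.2 _ h1 _ h2 h3
    have hRs : ∀ α ∈ longBC n, ∀ y ∈ Λs, (α, y) ∈ PhiRe (Cn n) Λ := fun α hα y hy =>
      ⟨Or.inl hα, by rw [hs α hα]; exact hy⟩
    have hRs' : ∀ α ∈ longBC n, ∀ y, (α, y) ∈ Ψ' → y ∈ Λs := by
      intro α hα y hy
      have := (hR hy).2
      rwa [hs α hα] at this
    let P : E n → Prop := fun α => ∃ y ∈ Λs, (α, y) ∈ Ψ' ∧ y - t α ∉ H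
    have hP : ∀ α ∈ longBC n, ∀ β ∈ longBC n, β - α ∈ longBC n → P α → P β := by
      rintro α hα β hβ hβα ⟨y, hy, hy1, hy2⟩
      have h1 := hne _ hβα
      have hm := add_mem hy (t_mem (β - α))
      have := hadd _ _ _ _ hy1 (hsub h1) (hRs _ (by simpa using hβ) _ hm)
      rw [add_sub_cancel] at this
      refine ⟨_, hm, this, ?_⟩
      rw [t_sub β hβ α hα]
      rwa [show y + (t β - t α) - t β = y - t α by abel]
    have hex : ∃ α ∈ longBC n, P α := by
      have : ∃ x ∈ Ψ', x ∉ Ψ := by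
        by_contra! h
        exact hneq (Set.Subset.antisymm h hsub)
      obtain ⟨⟨v, y⟩, hx, hx'⟩ := this
      rcases (hR hx).1 with hv | hv
      · have hy := hRs' v hv y hx
        exact ⟨v, hv, y, hy, hx, fun h => hx' (memΨ v hv y hy h)⟩
      · have hv : v ∈ divBC n := hv
        have hyl : y ∈ Λl := by
          have := (hR hx).2
          rwa [hl v hv] at this
        have hyH : y ∈ H := hlH hyl
        obtain ⟨α, hα, γ, hγ, e, -⟩ := div_split hn hv
        have h1 := hne _ (long_neg hγ)
        have hm := add_mem (hH hyH) (t_mem (-γ))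
        have e' : v + -γ = α := by rw [e]; abel
        have h2 := hadd _ _ _ _ hx (hsub h1) (by rw [e']; exact hRs _ hα _ hm)
        rw [e'] at h2
        refine ⟨α, hα, _, hm, h2, fun h => ?_⟩
        have hneg : t (-γ) = - t γ := by
          have h3 := t_add γ (sc hγ) (-γ) (neg_mem (sc hγ))
          have h4 := t_sub γ hγ γ hγ
          rw [add_neg_cancel] at h3
          rw [sub_self, sub_self] at h4
          rw [h4] at h3
          exact (neg_eq_of_add_eq_zero_right h3.symm).symm
        rw [hneg] at h
        apply t_sum α hα γ hγ (e ▸ hv)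
        have := sub_mem hyH h
        rwa [show y - (y + -t γ - t α) = t α + t γ by abel] at this
    obtain ⟨α1, hα1, hPα1⟩ := hex
    have hall : ∀ β ∈ longBC n, P β := fun β hβ => long_conn hn P hP hα1 hβ hPα1
    have hfull : ∀ β ∈ longBC n, ∀ z ∈ Λs, (β, z) ∈ Ψ' := by
      intro β hβ z hz
      by_cases hzH : z - t β ∈ H
      · exact hsub (memΨ β hβ z hz hzH)
      · obtain ⟨α, hα, hβα⟩ := long_adj hn hβ
        obtain ⟨y, hy, hy1, hy2⟩ := hall α hα
        have h1 := idx2_sub hi (sub_mem hz (t_mem β)) (sub_mem hy (t_mem α)) hzH hy2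
        have h2 : (β - α, z - y) ∈ Ψ := by
          refine memΨ _ hβα _ (sub_mem hz hy) ?_
          rw [t_sub β hβ α hα]
          rwa [show z - y - (t β - t α) = z - t β - (y - t α) by abel]
        have := hadd _ _ _ _ hy1 (hsub h2) (by simpa using hRs β hβ z hz)
        simpa using this
    apply hΨ'.1.2.2.1
    refine Set.Subset.antisymm hR ?_
    rintro ⟨v, y⟩ ⟨hv | hv, hy⟩
    · refine hfull v hv y ?_
      dsimp only at hy hv
      rwa [hs v hv] at hy
    · dsimp only at hy hv
      obtain ⟨α, hα, γ, hγ, e, -⟩ := div_split hn hv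
      have hyl : y ∈ Λl := by rwa [hl v hv] at hy
      have := hadd _ _ _ _ (hfull α hα y (hH (hlH hyl))) (hfull γ hγ 0 (zero_mem _))
        (by rw [← e, add_zero]; exact ⟨Or.inr hv, hy⟩)
      rwa [← e, add_zero] at this

/-! ### The gradient consists of all short roots -/

theorem long_coord {n : ℕ} {α : E n} (hα : α ∈ longBC n) (k : Fin n) :
    α k = 0 ∨ ∃ (j : Fin n) (c d : ℝ), k ≠ j ∧ (c = 1 ∨ c = -1) ∧ (d = 1 ∨ d = -1) ∧
      α = c • eps k + d • eps j ∧ α k = c := by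
  obtain ⟨i, j, hij, c, d, hc, hd, rfl⟩ := hα
  by_cases h1 : k = i
  · subst h1
    right
    exact ⟨j, c, d, hij, hc, hd, rfl, by simp [eps_apply, hij]⟩
  · by_cases h2 : k = j
    · subst h2
      right
      exact ⟨i, d, c, hij.symm, hd, hc, add_comm _ _, by simp [eps_apply, h1]⟩
    · left
      simp [eps_apply, h1, h2]

theorem split_form {n : ℕ} {α β : E n} (hα : α ∈ longBC n) (hβ : β ∈ longBC n) {i : Fin n}
    {c : ℝ} (hc : c = 1 ∨ c = -1) (h : α + β = (2 * c) • eps i) :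
    ∃ (j : Fin n) (d : ℝ), i ≠ j ∧ (d = 1 ∨ d = -1) ∧ α = c • eps i + d • eps j ∧
      β = c • eps i + (-d) • eps j := by
  have hi := congrArg (fun v : E n => v i) h
  simp [eps_apply] at hi
  have main : α i = c → ∃ (j : Fin n) (d : ℝ), i ≠ j ∧ (d = 1 ∨ d = -1) ∧
      α = c • eps i + d • eps j ∧ β = c • eps i + (-d) • eps j := by
    intro hαi
    rcases long_coord hα i with h0 | ⟨j, c', d, hij, hc', hd, rfl, h1⟩
    · rw [hαi] at h0
      rcases hc with rfl | rfl <;> norm_num at h0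
    · rw [hαi] at h1
      subst h1
      refine ⟨j, d, hij, hd, rfl, ?_⟩
      have : β = (2 * c) • eps i - (c • eps i + d • eps j) := by rw [← h]; abel
      rw [this, neg_smul, mul_smul, two_smul]; abel
  apply main
  have b1 : α i = 0 ∨ α i = 1 ∨ α i = -1 := by
    rcases long_coord hα i with h0 | ⟨j, c', d, hij, hc', hd, -, h1⟩
    · exact Or.inl h0
    · rw [h1]; exact Or.inr hc'
  have b2 : β i = 0 ∨ β i = 1 ∨ β i = -1 := by
    rcases long_coord hβ i with h0 | ⟨j, c', d, hij, hc', hd, -, h1⟩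
    · exact Or.inl h0
    · rw [h1]; exact Or.inr hc'
  rcases hc with rfl | rfl <;> rcases b1 with b1 | b1 | b1 <;> rcases b2 with b2 | b2 | b2 <;>
    rw [b1, b2] at hi <;> norm_num at hi <;> exact b1

/-- the sum of the coordinates in `S` as an additive map -/
def coordSum {Y : Type*} [AddCommGroup Y] {n : ℕ} (S : Finset (Fin n)) : E n × Y →+ ℝ :=
  AddMonoidHom.mk' (fun x => ∑ k ∈ S, x.1 k) (by
    intro a b
    simp [Finset.sum_add_distrib])

theorem coordSum_eps {Y : Type*} [AddCommGroup Y] {n : ℕ} (S : Finset (Fin n)) (c : ℝ)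
    (i : Fin n) : ∑ k ∈ S, (c • eps i : E n) k = if i ∈ S then c else 0 := by
  simp [eps_apply]

theorem cut {Y : Type*} [AddCommGroup Y] [Module ℝ Y]
    {n : ℕ} {Λ : E n → Set Y} (hED : IsExtensionDatum (Cn n) Λ) {Ψ : Set (E n × Y)}
    (hmax : IsMaxClosedSubSys (PhiRe (Cn n) Λ) Ψ)
    (hsemi : IsSemiClosedSubRS (Cn n) (longBC n) (divBC n) ∅ (Gr Ψ))
    (S : Fin n → Prop) {a b : Fin n} (ha : S a) (hb : ¬ S b) :
    ∃ (p q : Fin n) (c d : ℝ), S p ∧ ¬ S q ∧ (c = 1 ∨ c = -1) ∧ (d = 1 ∨ d = -1) ∧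
      (c • eps p + d • eps q : E n) ∈ Gr Ψ := by
  classical
  by_contra! hcon
  set F : Finset (Fin n) := Finset.univ.filter S with hF
  have hFm : ∀ k, k ∈ F ↔ S k := by simp [hF]
  set L : AddSubgroup (E n × Y) := (AddSubgroup.zmultiples (2 : ℝ)).comap (coordSum F) with hL
  have hLm : ∀ v y, (v, y) ∈ L ↔ ∃ m : ℤ, (m : ℝ) * 2 = ∑ k ∈ F, v k := by
    intro v y
    simp [hL, AddSubgroup.mem_zmultiples_iff, coordSum]
  have hsub : Ψ ⊆ PhiRe (Cn n) Λ ∩ L := by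
    rintro ⟨v, y⟩ hx
    have hxR := hmax.1.1.2.1 hx
    refine ⟨hxR, ?_⟩
    have hvG : v ∈ Gr Ψ := ⟨y, hx⟩
    have hv : v ∈ Cn n := hxR.1
    show (v, y) ∈ L
    rw [hLm]
    rcases hv with ⟨i, j, hij, c, d, hc, hd, rfl⟩ | hv
    · simp only [PiLp.add_apply, Finset.sum_add_distrib]
      rw [coordSum_eps (Y := Y), coordSum_eps (Y := Y)]
      simp only [hFm]
      by_cases hi : S i <;> by_cases hj : S j
      · simp only [hi, hj, if_true]
        rcases hc with rfl | rfl <;> rcases hd with rfl | rfl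
        · exact ⟨1, by norm_num⟩
        · exact ⟨0, by norm_num⟩
        · exact ⟨0, by norm_num⟩
        · exact ⟨-1, by norm_num⟩
      · exact absurd hvG (hcon i j c d hi hj hc hd)
      · rw [add_comm] at hvG
        exact absurd hvG (hcon j i d c hj hi hd hc)
      · exact ⟨0, by simp [hi, hj]⟩
    · obtain ⟨i, c, hc, rfl⟩ := mem_div_iff.1 hv
      rw [coordSum_eps (Y := Y)]
      split_ifs
      · rcases hc with rfl | rfl
        · exact ⟨1, by norm_num⟩
        · exact ⟨-1, by norm_num⟩
      · exact ⟨0, by norm_num⟩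
  have hab : a ≠ b := fun h => hb (h ▸ ha)
  have hm := mem_long hab (c := 1) (d := 1) (Or.inl rfl) (Or.inl rfl)
  have hne : PhiRe (Cn n) Λ ∩ L ≠ PhiRe (Cn n) Λ := by
    intro h
    have h1 : (((1 : ℝ) • eps a + (1 : ℝ) • eps b : E n), (0 : Y)) ∈ PhiRe (Cn n) Λ :=
      ⟨Or.inl hm, ED_zero hED (Or.inl hm)⟩
    rw [← h] at h1
    obtain ⟨m, hm⟩ := (hLm _ _).1 h1.2
    simp only [PiLp.add_apply, Finset.sum_add_distrib] at hm
    rw [coordSum_eps (Y := Y), coordSum_eps (Y := Y)] at hm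
    simp only [hFm] at hm
    simp only [ha, hb, if_true, if_false, add_zero] at hm
    have : m * 2 = 1 := by exact_mod_cast hm
    omega
  have hcl := closed_inter hED L (hmax.1.1.1.mono hsub) hne
  have heq := hmax.2 _ hcl hsub
  apply hsemi.2.1
  rintro α ⟨y, hy⟩ β ⟨z, hz⟩ hαβ
  refine ⟨0, ?_⟩
  rw [← heq] at hy hz ⊢
  refine ⟨⟨hαβ, ED_zero hED hαβ⟩, ?_⟩
  have h3 : (α, y) + (β, z) ∈ L := add_mem hy.2 hz.2
  show (α + β, 0) ∈ L
  rw [hLm]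
  exact (hLm _ _).1 h3

theorem gr_eq {Y : Type*} [AddCommGroup Y] [Module ℝ Y]
    {n : ℕ} {Λ : E n → Set Y} (hED : IsExtensionDatum (Cn n) Λ) {Ψ : Set (E n × Y)}
    (hmax : IsMaxClosedSubSys (PhiRe (Cn n) Λ) Ψ)
    (hsemi : IsSemiClosedSubRS (Cn n) (longBC n) (divBC n) ∅ (Gr Ψ)) :
    Gr Ψ = longBC n := by
  have hcut := fun (S : Fin n → Prop) (a b : Fin n) (ha : S a) (hb : ¬ S b) =>
    cut hED hmax hsemi S ha hb
  obtain ⟨⟨-, hΔC, hrefl⟩, hnc, hsc⟩ := hsemi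
  generalize Gr Ψ = Δ at *
  have hneg : ∀ v ∈ Δ, -v ∈ Δ := by
    intro v hv
    have := hrefl v hv v hv
    rwa [(refl_self (hΔC hv)).2] at this
  have hadd : ∀ u ∈ Δ, ∀ v ∈ Δ, u + v ∈ longBC n → u + v ∈ Δ := by
    intro u hu v hv h
    by_contra hno
    rcases hsc u hu v hv (Or.inl h) hno with ⟨-, -, h1 | h1⟩ | ⟨-, -, h1⟩
    · exact long_not_div h h1
    · exact h1
    · exact h1
  push Not at hnc
  obtain ⟨α, hα, β, hβ, hαβ, hno⟩ := hnc
  have h1 : α ∈ longBC n ∧ β ∈ longBC n ∧ α + β ∈ divBC n := by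
    rcases hsc α hα β hβ hαβ hno with ⟨h1, h2, h3 | h3⟩ | ⟨-, -, h3⟩
    · exact ⟨h1, h2, h3⟩
    · exact h3.elim
    · exact h3.elim
  obtain ⟨hαl, hβl, hd⟩ := h1
  obtain ⟨i, c, hc, e⟩ := mem_div_iff.1 hd
  obtain ⟨j, d, hij, hdd, rfl, rfl⟩ := split_form hαl hβl hc e
  rw [e] at hno
  have hsgn : ∀ (k : Fin n) (c c' : ℝ), (c = 1 ∨ c = -1) → (c' = 1 ∨ c' = -1) →
      ((2 * c) • eps k : E n) ∈ Δ → ((2 * c') • eps k : E n) ∈ Δ := by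
    intro k c c' hc hc' h
    have h' := hneg _ h
    rw [← neg_smul] at h'
    rcases hc with rfl | rfl <;> rcases hc' with rfl | rfl
    · exact h
    · convert h' using 2; norm_num
    · convert h' using 2; norm_num
    · exact h
  -- no long roots
  have hnolong : ∀ v ∈ Δ, v ∈ longBC n := by
    intro v hv
    rcases hΔC hv with h | h
    · exact h
    · exfalso
      obtain ⟨a, c', hc', rfl⟩ := mem_div_iff.1 h
      obtain ⟨p, q, f, g, hp, hq, hf, hg, hpq⟩ := hcut
        (fun k => ((2 * 1 : ℝ) • eps k : E n) ∈ Δ) a i (hsgn _ _ _ hc' (Or.inl rfl) hv)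
        (fun h => hno (hsgn _ _ _ (Or.inl rfl) hc h))
      have hpq' : p ≠ q := fun h => hq (h ▸ hp)
      have h2 := hrefl _ hpq _ hp
      apply hq
      refine hsgn q (-(f * g)) 1 (sgn_neg (sgn_mul hf hg)) (Or.inl rfl) ?_
      convert h2 using 1
      unfold reflRoot
      rw [pairing_long hpq' hf hg]
      have hqp := hpq'.symm
      simp only [PiLp.smul_apply, eps_apply, hqp, if_true, if_false, smul_eq_mul, smul_add,
        smul_smul]
      rw [← sub_sub, ← sub_smul]
      have : (2 * 1 - (f * (2 * 1 * 1) + g * (2 * 1 * 0)) * f : ℝ) = 0 := by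
        rcases hf with rfl | rfl <;> norm_num
      rw [this, zero_smul, zero_sub, ← neg_smul]
      congr 1
      ring
  have hall : ∀ a, a ≠ i → ∀ f g : ℝ, (f = 1 ∨ f = -1) → (g = 1 ∨ g = -1) →
      (f • eps i + g • eps a : E n) ∈ Δ := by
    by_contra hcon
    push Not at hcon
    obtain ⟨b, hbi, f, g, hf, hg, hb⟩ := hcon
    have hnegs : ∀ (a : Fin n) (f g : ℝ), (f • eps i + g • eps a : E n) ∈ Δ →
        ((-f) • eps i + (-g) • eps a : E n) ∈ Δ := by
      intro a f g h
      have := hneg _ h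
      rw [neg_add] at this
      rwa [neg_smul, neg_smul]
    have hfix : ∀ (a : Fin n) (g : ℝ), (g = 1 ∨ g = -1) →
        (∀ f : ℝ, (f = 1 ∨ f = -1) → (f • eps i + g • eps a : E n) ∈ Δ) →
        ∀ f g : ℝ, (f = 1 ∨ f = -1) → (g = 1 ∨ g = -1) →
        (f • eps i + g • eps a : E n) ∈ Δ := by
      intro a g hg h f g' hf hg'
      have h1 := h f hf
      have h2 := hnegs _ _ _ (h (-f) (sgn_neg hf))
      rw [neg_neg] at h2
      rcases hg with rfl | rfl <;> rcases hg' with rfl | rfl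
      · exact h1
      · exact h2
      · rwa [neg_neg] at h2
      · exact h1
    have hj : ∀ f g : ℝ, (f = 1 ∨ f = -1) → (g = 1 ∨ g = -1) →
        (f • eps i + g • eps j : E n) ∈ Δ := by
      refine hfix j d hdd ?_
      intro f hf
      have h2 := hnegs _ _ _ hβ
      rw [neg_neg] at h2
      rcases hc with rfl | rfl <;> rcases hf with rfl | rfl
      · exact hα
      · exact h2
      · rwa [neg_neg] at h2
      · exact hα
    obtain ⟨p, q, c', d', hp, hq, hc', hd', hpq⟩ := hcut
      (fun a => a = i ∨ ∀ f g : ℝ, (f = 1 ∨ f = -1) → (g = 1 ∨ g = -1) →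
        (f • eps i + g • eps a : E n) ∈ Δ) i b (Or.inl rfl)
      (by
        rintro (h | h)
        · exact hbi h
        · exact hb (h f g hf hg))
    have hpq' : p ≠ q := by
      rintro rfl
      exact hq hp
    push Not at hq
    obtain ⟨hqi, f', g', hf', hg', hq⟩ := hq
    apply hq
    refine hfix q d' hd' ?_ f' g' hf' hg'
    have step : ∀ r : Fin n, r ≠ i → r ≠ q → ∀ s : ℝ, (s = 1 ∨ s = -1) →
        (∀ f g : ℝ, (f = 1 ∨ f = -1) → (g = 1 ∨ g = -1) →
          (f • eps i + g • eps r : E n) ∈ Δ) → (s • eps r + d' • eps q : E n) ∈ Δ →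
        ∀ f : ℝ, (f = 1 ∨ f = -1) → (f • eps i + d' • eps q : E n) ∈ Δ := by
      intro r hri hrq s hs hr hrq' f hf
      have e2 : (f • eps i + (-s) • eps r + (s • eps r + d' • eps q) : E n)
          = f • eps i + d' • eps q := by rw [neg_smul]; abel
      rw [← e2]
      refine hadd _ (hr f (-s) hf (sgn_neg hs)) _ hrq' ?_
      rw [e2]
      exact mem_long hqi.symm hf hd'
    by_cases hpi : p = i
    · subst hpi
      have hjq : j ≠ q := by
        rintro rfl
        exact hq (hj f' g' hf' hg')
      refine step j hij.symm hjq 1 (Or.inl rfl) hj ?_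
      have e2 : ((-c') • eps p + (1 : ℝ) • eps j + (c' • eps p + d' • eps q) : E n)
          = (1 : ℝ) • eps j + d' • eps q := by rw [neg_smul]; abel
      rw [← e2]
      refine hadd _ (hj _ _ (sgn_neg hc') (Or.inl rfl)) _ hpq ?_
      rw [e2]
      exact mem_long hjq (Or.inl rfl) hd'
    · exact step p hpi hpq' c' hc' (hp.resolve_left hpi) hpq
  refine Set.Subset.antisymm hnolong ?_
  rintro _ ⟨p, q, hpq, f, g, hf, hg, rfl⟩
  by_cases hpi : p = i
  · subst hpi
    exact hall q hpq.symm f g hf hg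
  · by_cases hqi : q = i
    · subst hqi
      rw [add_comm]
      exact hall p hpq g f hg hf
    · have e2 : ((1 : ℝ) • eps i + f • eps p + ((-1 : ℝ) • eps i + g • eps q) : E n)
          = f • eps p + g • eps q := by rw [neg_smul]; abel
      rw [← e2]
      refine hadd _ (hall p hpi _ _ (Or.inl rfl) hf) _ (hall q hqi _ _ (Or.inr rfl) hg) ?_
      rw [e2]
      exact mem_long hpq hf hg

/-! ### The forward direction -/

/-- the additive map `v ↦ ∑ vₖ tₖ + (∑ vₖ)/2 · u` -/
def Tmap {Y : Type*} [AddCommGroup Y] [Module ℝ Y] {n : ℕ} (t : Fin n → Y) (u : Y) :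
    E n →+ Y :=
  AddMonoidHom.mk' (fun v => ∑ k, v k • t k + ((∑ k, v k) / 2) • u) (by
    intro a b
    simp only [PiLp.add_apply, add_smul, Finset.sum_add_distrib, add_div]
    abel)

theorem Tmap_long {Y : Type*} [AddCommGroup Y] [Module ℝ Y] {n : ℕ} (t : Fin n → Y) (u : Y)
    (a b : Fin n) (c d : ℝ) :
    Tmap t u (c • eps a + d • eps b) = c • t a + d • t b + ((c + d) / 2) • u := by
  simp [Tmap, eps_apply, add_smul, Finset.sum_add_distrib]

/-- the stabilizer of `Ψ` among translations -/
def Hstab {Y : Type*} [AddCommGroup Y] {n : ℕ} (Ψ : Set (E n × Y)) : AddSubgroup Y where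
  carrier := {h | ∀ α y, (α, y) ∈ Ψ → (α, y + h) ∈ Ψ ∧ (α, y - h) ∈ Ψ}
  zero_mem' := by
    intro α y h
    simpa using h
  add_mem' := by
    intro a b ha hb α y h
    constructor
    · rw [← add_assoc]
      exact (hb _ _ (ha _ _ h).1).1
    · rw [← sub_sub]
      exact (hb _ _ (ha _ _ h).2).2
  neg_mem' := by
    intro a ha α y h
    rw [← sub_eq_add_neg, sub_neg_eq_add]
    exact ⟨(ha _ _ h).2, (ha _ _ h).1⟩

theorem exists_lift {Y : Type*} [AddCommGroup Y] [Module ℝ Y] {n : ℕ} (hn : 3 ≤ n)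
    (Ψ : Set (E n × Y)) (hex : ∀ α ∈ longBC n, ∃ y, (α, y) ∈ Ψ)
    (hneg : ∀ α y, (α, y) ∈ Ψ → (-α, -y) ∈ Ψ)
    (hadd : ∀ α y β z, (α, y) ∈ Ψ → (β, z) ∈ Ψ → α + β ∈ longBC n → (α + β, y + z) ∈ Ψ) :
    ∃ T : E n →+ Y, ∀ α ∈ longBC n, (α, T α) ∈ Ψ := by
  classical
  choose! z hz using hex
  let i0 : Fin n := ⟨0, by omega⟩
  let i1 : Fin n := ⟨1, by omega⟩
  have h01 : i0 ≠ i1 := by simp [i0, i1]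
  have o1 : (1 : ℝ) = 1 ∨ (1 : ℝ) = -1 := Or.inl rfl
  have o2 : (-1 : ℝ) = 1 ∨ (-1 : ℝ) = -1 := Or.inr rfl
  let t : Fin n → Y := fun a => if a = i0 then 0 else z ((1 : ℝ) • eps a + (-1 : ℝ) • eps i0)
  have t0 : t i0 = 0 := by simp [t]
  have ht : ∀ a, a ≠ i0 → ((1 : ℝ) • eps a + (-1 : ℝ) • eps i0, t a) ∈ Ψ := by
    intro a ha
    have : t a = z ((1 : ℝ) • eps a + (-1 : ℝ) • eps i0) := by simp [t, ha]
    rw [this]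
    exact hz _ (mem_long ha o1 o2)
  let p : Y := z ((1 : ℝ) • eps i0 + (1 : ℝ) • eps i1)
  have hp : ((1 : ℝ) • eps i0 + (1 : ℝ) • eps i1, p) ∈ Ψ := hz _ (mem_long h01 o1 o1)
  let u : Y := p - t i1
  -- addition with a prescribed result
  have hadd' : ∀ α y β w γ x, (α, y) ∈ Ψ → (β, w) ∈ Ψ → γ ∈ longBC n → α + β = γ →
      y + w = x → (γ, x) ∈ Ψ := by
    rintro α y β w _ _ h1 h2 h3 rfl rfl
    exact hadd _ _ _ _ h1 h2 h3
  have hneg' : ∀ α y β x, (α, y) ∈ Ψ → -α = β → -y = x → (β, x) ∈ Ψ := by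
    rintro α y _ _ h rfl rfl
    exact hneg _ _ h
  have A0 : ∀ b, b ≠ i0 → ((1 : ℝ) • eps i0 + (-1 : ℝ) • eps b, -t b) ∈ Ψ := by
    intro b hb
    refine hneg' _ _ _ _ (ht b hb) ?_ rfl
    simp only [neg_smul]; abel
  have A : ∀ a b, a ≠ b → ((1 : ℝ) • eps a + (-1 : ℝ) • eps b, t a - t b) ∈ Ψ := by
    intro a b hab
    by_cases ha : a = i0
    · subst ha
      rw [t0, zero_sub]
      exact A0 b hab.symm
    · by_cases hb : b = i0
      · subst hb
        rw [t0, sub_zero]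
        exact ht a ha
      · refine hadd' _ _ _ _ _ _ (ht a ha) (A0 b hb) (mem_long hab o1 o2) ?_ ?_
        · simp only [neg_smul]; abel
        · abel
  have B0 : ∀ b, b ≠ i0 → ((1 : ℝ) • eps i0 + (1 : ℝ) • eps b, t b + u) ∈ Ψ := by
    intro b hb
    by_cases hb1 : b = i1
    · subst hb1
      have : t i1 + u = p := by simp [u]
      rw [this]; exact hp
    · refine hadd' _ _ _ _ _ _ (A b i1 hb1) hp (mem_long hb.symm o1 o1) ?_ ?_
      · simp only [neg_smul]; abel
      · simp only [u]; abel
  have B : ∀ a b, a ≠ b → ((1 : ℝ) • eps a + (1 : ℝ) • eps b, t a + t b + u) ∈ Ψ := by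
    intro a b hab
    by_cases ha : a = i0
    · subst ha
      rw [t0, zero_add]
      exact B0 b hab.symm
    · by_cases hb : b = i0
      · subst hb
        rw [t0, add_zero, add_comm ((1 : ℝ) • eps a)]
        exact B0 a ha
      · refine hadd' _ _ _ _ _ _ (ht a ha) (B0 b hb) (mem_long hab o1 o1) ?_ ?_
        · simp only [neg_smul]; abel
        · abel
  refine ⟨Tmap t u, ?_⟩
  rintro _ ⟨a, b, hab, c, d, rfl | rfl, rfl | rfl, rfl⟩
  · rw [Tmap_long]
    convert B a b hab using 2
    norm_num
  · rw [Tmap_long]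
    convert A a b hab using 2
    norm_num
    abel
  · rw [Tmap_long]
    refine hneg' _ _ _ _ (A a b hab) ?_ ?_
    · simp only [neg_smul]; abel
    · norm_num
      abel
  · rw [Tmap_long]
    refine hneg' _ _ _ _ (B a b hab) ?_ ?_
    · simp only [neg_smul]; abel
    · norm_num
      abel

theorem forward {Y : Type*} [AddCommGroup Y] [Module ℝ Y]
    {n : ℕ} (hn : 3 ≤ n) (Λ : E n → Set Y) (Λs : AddSubgroup Y) (Λl : Set Y)
    (hED : IsExtensionDatum (Cn n) Λ)
    (hs : ∀ α ∈ longBC n, Λ α = (Λs : Set Y)) (hl : ∀ α ∈ divBC n, Λ α = Λl)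
    (Ψ : Set (E n × Y)) (hmax : IsMaxClosedSubSys (PhiRe (Cn n) Λ) Ψ)
    (hsemi : IsSemiClosedSubRS (Cn n) (longBC n) (divBC n) ∅ (Gr Ψ)) :
      ∃ (H : AddSubgroup Y) (τ : AddSubgroup.closure (longBC n) →+ Y),
        H ≤ Λs ∧ (H.addSubgroupOf Λs).index = 2 ∧ Λl ⊆ (H : Set Y) ∧
        (∀ x, τ x ∈ Λs) ∧
        (∀ (α β : E n) (hα : α ∈ longBC n) (hβ : β ∈ longBC n), α + β ∈ divBC n →
          τ ⟨α, AddSubgroup.subset_closure hα⟩ +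
            τ ⟨β, AddSubgroup.subset_closure hβ⟩ ∉ H) ∧
        Ψ = {x | ∃ h : x.1 ∈ longBC n,
          x.2 ∈ Λs ∧ x.2 - τ ⟨x.1, AddSubgroup.subset_closure h⟩ ∈ H} := by
  have hGr := gr_eq hED hmax hsemi
  have hR := hmax.1.1.2.1
  have hlong : ∀ α y, (α, y) ∈ Ψ → α ∈ longBC n := by
    intro α y h
    rw [← hGr]; exact ⟨y, h⟩
  have hval : ∀ α y, (α, y) ∈ Ψ → y ∈ Λs := by
    intro α y h
    have h1 := (hR h).2
    rwa [hs _ (hlong _ _ h)] at h1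
  have hex : ∀ α ∈ longBC n, ∃ y, (α, y) ∈ Ψ := by
    intro α hα
    rw [← hGr] at hα; exact hα
  have hRs : ∀ α ∈ longBC n, ∀ y ∈ Λs, (α, y) ∈ PhiRe (Cn n) Λ := fun α hα y hy =>
    ⟨Or.inl hα, by rw [hs α hα]; exact hy⟩
  have hneg : ∀ α y, (α, y) ∈ Ψ → (-α, -y) ∈ Ψ := by
    intro α y h
    have h1 := hmax.1.1.2.2.2 _ h _ h
    have h2 := refl_self (hR h).1
    dsimp only at h2
    unfold reflAff at h1
    dsimp only at h1
    rw [h2.1, h2.2, two_smul] at h1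
    convert h1 using 2
    abel
  have hadd : ∀ α y β z, (α, y) ∈ Ψ → (β, z) ∈ Ψ → α + β ∈ longBC n →
      (α + β, y + z) ∈ Ψ := fun α y β z h1 h2 h3 =>
    hmax.1.2 _ h1 _ h2 (hRs _ h3 _ (add_mem (hval _ _ h1) (hval _ _ h2)))
  have hnol : ∀ α y β z, (α, y) ∈ Ψ → (β, z) ∈ Ψ → α + β ∈ divBC n → y + z ∉ Λl := by
    intro α y β z h1 h2 h3 h4
    have h5 := hmax.1.2 _ h1 _ h2 ⟨Or.inr h3, by
      show y + z ∈ Λ (α + β)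
      rw [hl _ h3]; exact h4⟩
    exact long_not_div (hlong _ _ h5) h3
  obtain ⟨T, hT⟩ := exists_lift hn Ψ hex hneg hadd
  -- differences stabilize
  have hstab : ∀ β x γ y z, (β, x) ∈ Ψ → (γ, y) ∈ Ψ → (γ, z) ∈ Ψ → β - γ ∈ longBC n →
      (β, x + (y - z)) ∈ Ψ := by
    intro β x γ y z h1 h2 h3 h4
    have h5 := hadd _ _ _ _ h1 (hneg _ _ h3) (by rwa [← sub_eq_add_neg])
    have h6 := hadd _ _ _ _ h5 h2 (by simpa using hlong _ _ h1)
    convert h6 using 2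
    · abel
    · abel
  have hD : ∀ γ y z, (γ, y) ∈ Ψ → (γ, z) ∈ Ψ → y - z ∈ Hstab Ψ := by
    intro γ y z hy hz α x hx
    have hall : ∃ y' z', (((α, y') ∈ Ψ ∧ (α, z') ∈ Ψ) ∧ y' - z' = y - z) := by
      refine long_conn hn (fun α => ∃ y' z', (((α, y') ∈ Ψ ∧ (α, z') ∈ Ψ) ∧ y' - z' = y - z))
        ?_ (hlong _ _ hy) (hlong _ _ hx) ⟨y, z, ⟨hy, hz⟩, rfl⟩
      rintro α hα β hβ hβα ⟨y', z', ⟨h1, h2⟩, h3⟩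
      obtain ⟨w, hw⟩ := hex _ hβα
      have e : α + (β - α) = β := by abel
      have h4 := hadd _ _ _ _ h1 hw (by rwa [e])
      have h5 := hadd _ _ _ _ h2 hw (by rwa [e])
      rw [e] at h4 h5
      exact ⟨_, _, ⟨h4, h5⟩, by rw [← h3]; abel⟩
    obtain ⟨δ, hδ, hαδ⟩ := long_adj hn (hlong _ _ hx)
    obtain ⟨y', z', ⟨h1, h2⟩, h3⟩ := hall
    obtain ⟨w, hw⟩ := hex _ (long_neg hαδ)
    have e : α + -(α - δ) = δ := by abel
    have h4 := hadd _ _ _ _ h1 hw (by rwa [e])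
    have h5 := hadd _ _ _ _ h2 hw (by rwa [e])
    rw [e] at h4 h5
    constructor
    · convert hstab _ _ _ _ _ hx h4 h5 hαδ using 2
      rw [← h3]; abel
    · convert hstab _ _ _ _ _ hx h5 h4 hαδ using 2
      rw [← h3]; abel
  set H := Hstab Ψ with hHdef
  have memH : ∀ h ∈ H, ∀ α y, (α, y) ∈ Ψ → (α, y + h) ∈ Ψ := fun h hh α y hy =>
    (hh α y hy).1
  let i0 : Fin n := ⟨0, by omega⟩
  let i1 : Fin n := ⟨1, by omega⟩
  have h01 : i0 ≠ i1 := by simp [i0, i1]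
  have h10 := h01.symm
  let v : E n := (2 * 1 : ℝ) • eps i0
  have hv : v ∈ divBC n := mem_div_iff.2 ⟨i0, 1, Or.inl rfl, rfl⟩
  let α0 : E n := (1 : ℝ) • eps i0 + (1 : ℝ) • eps i1
  have hα0 : α0 ∈ longBC n := mem_long h01 (Or.inl rfl) (Or.inl rfl)
  have hHs : H ≤ Λs := by
    intro h hh
    have h1 := hval _ _ (memH h hh _ _ (hT α0 hα0))
    have h2 := hval _ _ (hT α0 hα0)
    simpa using sub_mem h1 h2
  have Tmem : ∀ x ∈ AddSubgroup.closure (longBC n), T x ∈ Λs := by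
    intro x hx
    have : AddSubgroup.closure (longBC n) ≤ Λs.comap T := by
      rw [AddSubgroup.closure_le]
      intro α hα
      exact hval _ _ (hT α hα)
    exact this hx
  have hTv : T v ∈ Λs := Tmem v (Cn_sub_closure hn (Or.inr hv))
  have hΨeq : ∀ α y, (α, y) ∈ Ψ ↔ α ∈ longBC n ∧ y - T α ∈ H := by
    intro α y
    constructor
    · intro h
      have h1 := hlong _ _ h
      exact ⟨h1, hD _ _ _ h (hT α h1)⟩
    · rintro ⟨h1, h2⟩
      have := memH _ h2 _ _ (hT α h1)
      simpa using this
  let τ : AddSubgroup.closure (longBC n) →+ Y := T.comp (AddSubgroup.closure (longBC n)).subtype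
  have hτ : ∀ x h, τ ⟨x, h⟩ = T x := fun _ _ => rfl
  -- properties of `Λl`
  have h0l : (0 : Y) ∈ Λl := by
    rw [← hl v hv]; exact ED_zero hED (Or.inr hv)
  have hls : Λl ⊆ (Λs : Set Y) := by
    intro y hy
    have h1 := hED.1 v (Or.inr hv) α0 (Or.inl hα0) y (by rw [hl v hv]; exact hy) 0
      (ED_zero hED (Or.inl hα0))
    rw [hs _ (refl_long (Or.inr hv) hα0), pairing_div i0 (Or.inl rfl)] at h1
    simp [α0, eps_apply, h01] at h1
    exact h1
  have h2s : ∀ s ∈ Λs, (2 : ℕ) • s ∈ Λl := by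
    intro s hs'
    have h1 := hED.1 α0 (Or.inl hα0) v (Or.inr hv) (-s) (by rw [hs _ hα0]; exact neg_mem hs') 0
      (ED_zero hED (Or.inr hv))
    rw [hl _ (refl_div (Or.inl hα0) hv), pairing_long h01 (Or.inl rfl) (Or.inl rfl)] at h1
    simp [v, eps_apply, h10] at h1
    rw [two_smul] at h1
    rwa [two_smul]
  have hnoT : ∀ w ∈ divBC n, ∀ y ∈ Λl, y - T w ∉ H := by
    intro w hw y hy h
    obtain ⟨α, hα, γ, hγ, rfl, -⟩ := div_split hn hw
    refine hnol _ _ _ _ (memH _ h _ _ (hT α hα)) (hT γ hγ) hw ?_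
    rw [map_add]
    convert hy using 1
    abel
  have hTvH : T v ∉ H := by
    intro h
    apply hnoT v hv 0 h0l
    simpa using h
  -- maximality of `H`
  have hKmax : ∀ K : AddSubgroup Y, H ≤ K → K ≤ Λs → K ≠ H → Λs ≤ K := by
    intro K hHK hKs hne
    by_contra hno
    obtain ⟨s, hs1, hs2⟩ := SetLike.not_le_iff_exists.1 hno
    have hsub : Ψ ⊆ PhiRe (Cn n) Λ ∩ Lsub K τ := by
      rintro ⟨α, y⟩ h
      have h1 := (hΨeq α y).1 h
      exact ⟨hR h, AddSubgroup.subset_closure h1.1, hHK h1.2⟩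
    have hprop : PhiRe (Cn n) Λ ∩ Lsub K τ ≠ PhiRe (Cn n) Λ := by
      intro h
      have h1 := hRs α0 hα0 (s + T α0) (add_mem hs1 (hval _ _ (hT α0 hα0)))
      rw [← h] at h1
      have h2 := (mem_Lsub (AddSubgroup.subset_closure hα0)).1 h1.2
      rw [hτ, add_sub_cancel_right] at h2
      exact hs2 h2
    have heq := hmax.2 _ (closed_inter hED _ (hmax.1.1.1.mono hsub) hprop) hsub
    apply hne
    refine le_antisymm ?_ hHK
    intro k hk
    have h1 : (α0, T α0 + k) ∈ PhiRe (Cn n) Λ ∩ Lsub K τ := by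
      refine ⟨hRs α0 hα0 _ (add_mem (hval _ _ (hT α0 hα0)) (hKs hk)), ?_⟩
      refine (mem_Lsub (AddSubgroup.subset_closure hα0)).2 ?_
      rw [hτ, add_sub_cancel_left]
      exact hk
    rw [heq] at h1
    have := ((hΨeq _ _).1 h1).2
    rwa [add_sub_cancel_left] at this
  have h2H : ∀ s ∈ Λs, (2 : ℕ) • s ∈ H := by
    intro s hs1
    by_contra hno
    have hK := hKmax (H ⊔ Λs.map (nsmulAddMonoidHom 2)) le_sup_left (sup_le hHs (by
      rintro _ ⟨s', hs', rfl⟩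
      exact nsmul_mem hs' 2)) (by
      intro h
      apply hno
      rw [← h]
      exact AddSubgroup.mem_sup_right ⟨s, hs1, rfl⟩)
    obtain ⟨h, hh, w, ⟨s', hs', rfl⟩, e⟩ := AddSubgroup.mem_sup.1 (hK hTv)
    apply hnoT v hv _ (h2s s' hs')
    rw [← e]
    have : (2 : ℕ) • s' - (h + (nsmulAddMonoidHom 2) s') = -h := by
      simp [nsmulAddMonoidHom]
    rw [this]
    exact neg_mem hh
  have hcos : ∀ b ∈ Λs, b ∉ H → b + T v ∈ H := by
    intro b hb hbH
    have hK := hKmax (H ⊔ AddSubgroup.zmultiples b) le_sup_left (sup_le hHs (by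
      rwa [AddSubgroup.zmultiples_le])) (by
      intro h
      apply hbH
      rw [← h]
      exact AddSubgroup.mem_sup_right (AddSubgroup.mem_zmultiples b))
    obtain ⟨h, hh, w, ⟨m, rfl⟩, e⟩ := AddSubgroup.mem_sup.1 (hK hTv)
    dsimp only at e
    have h2b := h2H b hb
    rw [two_nsmul] at h2b
    obtain ⟨k, rfl | rfl⟩ := Int.even_or_odd' m
    · exfalso
      apply hTvH
      rw [← e]
      refine add_mem hh ?_
      have : (2 * k) • b = k • (b + b) := by rw [mul_comm, mul_smul, two_smul]
      rw [this]
      exact zsmul_mem h2b k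
    · have : b + T v = h + (k + 1) • (b + b) := by
        rw [← e]
        module
      rw [this]
      exact add_mem hh (zsmul_mem h2b _)
  refine ⟨H, τ, hHs, ?_, ?_, ?_, ?_, ?_⟩
  · rw [AddSubgroup.index_eq_two_iff]
    refine ⟨⟨T v, hTv⟩, ?_⟩
    rintro ⟨b, hb⟩
    simp only [AddSubgroup.mem_addSubgroupOf, AddSubgroup.coe_add]
    by_cases hbH : b ∈ H
    · refine Or.inr ⟨hbH, fun h => hTvH ?_⟩
      have := sub_mem h hbH
      rwa [add_sub_cancel_left] at this
    · exact Or.inl ⟨hcos b hb hbH, hbH⟩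
  · intro y hy
    by_contra hno
    apply hnoT v hv y hy
    have h1 := hcos y (hls hy) hno
    have h2 := sub_mem h1 (h2H _ hTv)
    rw [two_nsmul] at h2
    convert h2 using 1
    abel
  · rintro ⟨x, hx⟩
    exact Tmem x hx
  · intro α β hα hβ hαβ h
    rw [hτ, hτ, ← map_add] at h
    apply hnoT _ hαβ 0 h0l
    rw [zero_sub]
    exact neg_mem h
  · ext ⟨α, y⟩
    rw [hΨeq]
    constructor
    · rintro ⟨h1, h2⟩
      refine ⟨h1, ?_, h2⟩
      exact hval _ _ ((hΨeq _ _).2 ⟨h1, h2⟩)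
    · rintro ⟨h1, -, h2⟩
      exact ⟨h1, h2⟩

/-- Theorem 4.1 (type `C_n`, `n ≥ 3`): maximal closed subroot systems with
semi-closed gradient.  The ℤ-linear map `τ : Φ̊_s → Λ_s/H` is encoded by a lift
`τ : ⟨Φ̊_s⟩ →+ Y` with values in `Λ_s` (possible since `⟨Φ̊_s⟩` is free abelian);
`y + H = τ(α)` becomes `y - τ(α) ∈ H` and `τ(α) ≠ -τ(β)` becomes
`τ(α) + τ(β) ∉ H`. -/
theorem statement10 {Y : Type*} [AddCommGroup Y] [Module ℝ Y] [FiniteDimensional ℝ Y]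
    {n : ℕ} (hn : 3 ≤ n) (Λ : E n → Set Y) (Λs : AddSubgroup Y) (Λl : Set Y)
    (hED : IsExtensionDatum (Cn n) Λ)
    (hs : ∀ α ∈ longBC n, Λ α = (Λs : Set Y)) (hl : ∀ α ∈ divBC n, Λ α = Λl)
    (Ψ : Set (E n × Y)) :
    (IsMaxClosedSubSys (PhiRe (Cn n) Λ) Ψ ∧
        IsSemiClosedSubRS (Cn n) (longBC n) (divBC n) ∅ (Gr Ψ)) ↔
      ∃ (H : AddSubgroup Y) (τ : AddSubgroup.closure (longBC n) →+ Y),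
        H ≤ Λs ∧ (H.addSubgroupOf Λs).index = 2 ∧ Λl ⊆ (H : Set Y) ∧
        (∀ x, τ x ∈ Λs) ∧
        (∀ (α β : E n) (hα : α ∈ longBC n) (hβ : β ∈ longBC n), α + β ∈ divBC n →
          τ ⟨α, AddSubgroup.subset_closure hα⟩ +
            τ ⟨β, AddSubgroup.subset_closure hβ⟩ ∉ H) ∧
        Ψ = {x | ∃ h : x.1 ∈ longBC n,
          x.2 ∈ Λs ∧ x.2 - τ ⟨x.1, AddSubgroup.subset_closure h⟩ ∈ H} := by
  constructor
  · rintro ⟨h1, h2⟩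
    exact forward hn Λ Λs Λl hED hs hl Ψ h1 h2
  · rintro ⟨H, τ, h1, h2, h3, h4, h5, h6⟩
    exact backward hn Λ Λs Λl hED hs hl Ψ H τ h1 h2 h3 h4 h5 h6

end BdS
end
end

section
/- Let Φ̊ ⊂ ℝ⁴ be the root system of type F₄, let (Λ_α) be an extension datum of type (Φ̊, Y) with common values Λ_s on short and Λ_ℓ on long roots, and let Φ^re be the associated set of real roots. Then Ψ ⊆ Φ^re is a maximal closed subroot system whose gradient Gr(Ψ) is a semi-closed subroot system of Φ̊ if and only if there exist a subgroup H of Λ_s of index 2 with Λ_ℓ ⊆ H, a subset I ⊆ {1,2,3,4} with |I| = 2, and a ℤ-linear map τ : Φ̊_s → Λ_s/H satisfying τ(εᵢ) = τ(εⱼ) whenever i, j ∈ I or i, j ∉ I, and τ(ε_r) ≠ τ(ε_s) whenever r ∈ I and s ∉ I, such that Ψ = {α ⊕ y : α ∈ Φ̊_s, y ∈ Λ_s, y + H = τ(α)} ∪ {(±εᵢ ± εⱼ) ⊕ y : y ∈ Λ_ℓ, i ≠ j, and either i, j ∈ I or i, j ∉ I}. -/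
open scoped RealInnerProductSpace Pointwise

noncomputable section

namespace BdS

variable {V Y : Type*} [NormedAddCommGroup V] [InnerProductSpace ℝ V]
variable [AddCommGroup Y] [Module ℝ Y]

/-- short roots of `F₄`. -/
def F4short : Set (E 4) :=
  shortBC 4 ∪
    {v | ∃ c : Fin 4 → ℝ, (∀ i, c i = 1 ∨ c i = -1) ∧ v = (2:ℝ)⁻¹ • ∑ i, c i • eps i}

/-- the root system of type `F₄`. -/
def F4 : Set (E 4) := F4short ∪ longBC 4

lemma eps_mem_F4short (i : Fin 4) : eps i ∈ F4short :=
  Set.mem_union_left _ ⟨i, Or.inl rfl⟩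

/-- `ε_i` as an element of the group generated by the short roots of `F₄`. -/
def epsF4 (i : Fin 4) : AddSubgroup.closure F4short :=
  ⟨eps i, AddSubgroup.subset_closure (eps_mem_F4short i)⟩


/-! ### Integer coordinates -/

/-- integer quadruples -/
abbrev Q := ℤ × ℤ × ℤ × ℤ

/-- half of an integer quadruple, as a vector -/
def io (c : Q) : E 4 := !₂[(c.1 : ℝ) / 2, (c.2.1 : ℝ) / 2, (c.2.2.1 : ℝ) / 2, (c.2.2.2 : ℝ) / 2]

def qdot (a b : Q) : ℤ := a.1 * b.1 + a.2.1 * b.2.1 + a.2.2.1 * b.2.2.1 + a.2.2.2 * b.2.2.2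

def sgn : List ℤ := [1, -1]
def sgn2 : List ℤ := [2, -2]

def SL : List Q :=
  (sgn2.flatMap fun a => [(a, 0, 0, 0), (0, a, 0, 0), (0, 0, a, 0), (0, 0, 0, a)]) ++
  (sgn.flatMap fun a => sgn.flatMap fun b => sgn.flatMap fun c => sgn.map fun d => (a, b, c, d))

def TL : List Q :=
  sgn2.flatMap fun a => sgn2.flatMap fun b =>
    [(a, b, 0, 0), (a, 0, b, 0), (a, 0, 0, b), (0, a, b, 0), (0, a, 0, b), (0, 0, a, b)]

def RL : List Q := SL ++ TL

lemma io_add (a b : Q) : io (a + b) = io a + io b := by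
  ext i; fin_cases i <;> simp [io] <;> ring

lemma io_neg (a : Q) : io (-a) = -io a := by
  ext i; fin_cases i <;> simp [io] <;> ring

lemma io_sub (a b : Q) : io (a - b) = io a - io b := by
  rw [sub_eq_add_neg, io_add, io_neg, sub_eq_add_neg]

lemma io_zsmul (n : ℤ) (a : Q) : io (n • a) = n • io a := by
  ext i; fin_cases i <;> simp [io] <;> ring

lemma io_inj {a b : Q} (h : io a = io b) : a = b := by
  have h0 := congrArg (fun v : E 4 => v 0) h
  have h1 := congrArg (fun v : E 4 => v 1) h
  have h2 := congrArg (fun v : E 4 => v 2) h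
  have h3 := congrArg (fun v : E 4 => v 3) h
  simp [io] at h0 h1 h2 h3
  obtain ⟨a0, a1, a2, a3⟩ := a
  obtain ⟨b0, b1, b2, b3⟩ := b
  simp_all

lemma io_inner (a b : Q) : ⟪io a, io b⟫ = (qdot a b : ℝ) / 4 := by
  simp [io, qdot, PiLp.inner_apply, Fin.sum_univ_four]
  ring

lemma short_of_SL {c : Q} (h : c ∈ SL) : io c ∈ F4short := by
  simp only [SL, sgn, sgn2, List.mem_append, List.mem_flatMap, List.mem_map, List.mem_cons,
    List.not_mem_nil, or_false] at h
  rcases h with ⟨a, ha, h⟩ | ⟨a, ha, b, hb, c', hc, d, hd, rfl⟩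
  · left
    rcases h with rfl | rfl | rfl | rfl
    · refine ⟨0, ?_⟩
      rcases ha with rfl | rfl
      · left; ext i; fin_cases i <;> simp [io, eps]
      · right; ext i; fin_cases i <;> simp [io, eps]
    · refine ⟨1, ?_⟩
      rcases ha with rfl | rfl
      · left; ext i; fin_cases i <;> simp [io, eps]
      · right; ext i; fin_cases i <;> simp [io, eps]
    · refine ⟨2, ?_⟩
      rcases ha with rfl | rfl
      · left; ext i; fin_cases i <;> simp [io, eps]
      · right; ext i; fin_cases i <;> simp [io, eps]
    · refine ⟨3, ?_⟩
      rcases ha with rfl | rfl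
      · left; ext i; fin_cases i <;> simp [io, eps]
      · right; ext i; fin_cases i <;> simp [io, eps]
  · right
    refine ⟨![a, b, c', d], ?_, ?_⟩
    · intro i
      fin_cases i
      · rcases ha with rfl | rfl <;> simp
      · rcases hb with rfl | rfl <;> simp
      · rcases hc with rfl | rfl <;> simp
      · rcases hd with rfl | rfl <;> simp
    · ext i; fin_cases i <;> simp [io, eps, Fin.sum_univ_four] <;> ring

lemma sgn_lift {x : ℝ} (h : x = 1 ∨ x = -1) : ∃ n ∈ sgn, x = (n : ℝ) := by
  rcases h with rfl | rfl
  · exact ⟨1, by decide, by simp⟩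
  · exact ⟨-1, by decide, by simp⟩

lemma SL_of_short {v : E 4} (h : v ∈ F4short) : ∃ c ∈ SL, v = io c := by
  rcases h with ⟨i, h⟩ | ⟨c, hc, rfl⟩
  · rcases h with rfl | rfl
    · fin_cases i
      · exact ⟨(2, 0, 0, 0), by decide, by ext i; fin_cases i <;> simp [io, eps]⟩
      · exact ⟨(0, 2, 0, 0), by decide, by ext i; fin_cases i <;> simp [io, eps]⟩
      · exact ⟨(0, 0, 2, 0), by decide, by ext i; fin_cases i <;> simp [io, eps]⟩
      · exact ⟨(0, 0, 0, 2), by decide, by ext i; fin_cases i <;> simp [io, eps]⟩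
    · fin_cases i
      · exact ⟨(-2, 0, 0, 0), by decide, by ext i; fin_cases i <;> simp [io, eps]⟩
      · exact ⟨(0, -2, 0, 0), by decide, by ext i; fin_cases i <;> simp [io, eps]⟩
      · exact ⟨(0, 0, -2, 0), by decide, by ext i; fin_cases i <;> simp [io, eps]⟩
      · exact ⟨(0, 0, 0, -2), by decide, by ext i; fin_cases i <;> simp [io, eps]⟩
  · obtain ⟨n0, h0, e0⟩ := sgn_lift (hc 0)
    obtain ⟨n1, h1, e1⟩ := sgn_lift (hc 1)
    obtain ⟨n2, h2, e2⟩ := sgn_lift (hc 2)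
    obtain ⟨n3, h3, e3⟩ := sgn_lift (hc 3)
    refine ⟨(n0, n1, n2, n3), ?_, ?_⟩
    · refine List.mem_append_right _ ?_
      simp only [List.mem_flatMap, List.mem_map]
      exact ⟨n0, h0, n1, h1, n2, h2, n3, h3, rfl⟩
    · ext i; fin_cases i <;> simp [io, eps, Fin.sum_univ_four, e0, e1, e2, e3] <;> ring

/-- doubled standard basis vectors -/
def qe : Fin 4 → Q := ![(2, 0, 0, 0), (0, 2, 0, 0), (0, 0, 2, 0), (0, 0, 0, 2)]

lemma io_qe (i : Fin 4) : io (qe i) = eps i := by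
  fin_cases i <;> ext j <;> fin_cases j <;> simp [io, eps, qe]

lemma TL_dec1 : ∀ i j : Fin 4, i ≠ j → ∀ a ∈ sgn, ∀ b ∈ sgn, a • qe i + b • qe j ∈ TL := by
  decide +kernel

lemma TL_dec2 : ∀ c ∈ TL, ∃ i j : Fin 4, i ≠ j ∧ ∃ a ∈ sgn, ∃ b ∈ sgn,
    c = a • qe i + b • qe j := by
  decide +kernel

lemma sgn_real {n : ℤ} (h : n ∈ sgn) : (n : ℝ) = 1 ∨ (n : ℝ) = -1 := by
  simp only [sgn, List.mem_cons, List.not_mem_nil, or_false] at h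
  rcases h with rfl | rfl <;> simp

lemma long_of_TL {c : Q} (h : c ∈ TL) : io c ∈ longBC 4 := by
  obtain ⟨i, j, hij, a, ha, b, hb, rfl⟩ := TL_dec2 c h
  refine ⟨i, j, hij, a, b, sgn_real ha, sgn_real hb, ?_⟩
  rw [io_add, io_zsmul, io_zsmul, io_qe, io_qe, Int.cast_smul_eq_zsmul, Int.cast_smul_eq_zsmul]

lemma TL_of_long {v : E 4} (h : v ∈ longBC 4) : ∃ c ∈ TL, v = io c := by
  obtain ⟨i, j, hij, c, d, hc, hd, rfl⟩ := h
  obtain ⟨a, ha, rfl⟩ := sgn_lift hc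
  obtain ⟨b, hb, rfl⟩ := sgn_lift hd
  refine ⟨_, TL_dec1 i j hij a ha b hb, ?_⟩
  rw [io_add, io_zsmul, io_zsmul, io_qe, io_qe, Int.cast_smul_eq_zsmul, Int.cast_smul_eq_zsmul]

lemma short_iff {c : Q} : io c ∈ F4short ↔ c ∈ SL := by
  refine ⟨fun h => ?_, short_of_SL⟩
  obtain ⟨d, hd, e⟩ := SL_of_short h
  rwa [io_inj e]

lemma long_iff {c : Q} : io c ∈ longBC 4 ↔ c ∈ TL := by
  refine ⟨fun h => ?_, long_of_TL⟩
  obtain ⟨d, hd, e⟩ := TL_of_long h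
  rwa [io_inj e]

lemma F4_iff {c : Q} : io c ∈ F4 ↔ c ∈ RL := by
  simp only [F4, Set.mem_union, short_iff, long_iff, RL, List.mem_append]

lemma RL_of_F4 {v : E 4} (h : v ∈ F4) : ∃ c ∈ RL, v = io c := by
  rcases h with h | h
  · obtain ⟨c, hc, e⟩ := SL_of_short h
    exact ⟨c, List.mem_append_left _ hc, e⟩
  · obtain ⟨c, hc, e⟩ := TL_of_long h
    exact ⟨c, List.mem_append_right _ hc, e⟩

/-! ### Root facts -/

lemma dec_refl : ∀ a ∈ RL, ∀ b ∈ RL, qdot a a ≠ 0 ∧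
    qdot a a * (2 * qdot b a / qdot a a) = 2 * qdot b a ∧
    b - (2 * qdot b a / qdot a a) • a ∈ RL := by
  decide +kernel

lemma dec_pos : ∀ v ∈ SL, ∀ d ∈ RL, 0 < qdot v d → v = d ∨ v - d ∈ SL := by
  decide +kernel

def qadj (a b : Q) : Bool := decide (b + a ∈ SL ∨ b - a ∈ SL)

lemma dec_adj : ∀ a ∈ SL, ∀ b ∈ SL, ∃ g ∈ SL, qadj a g = true ∧ qadj g b = true := by
  decide +kernel

lemma dec_long_short : ∀ b ∈ TL, ∃ a ∈ SL, b + a ∈ SL := by decide +kernel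

lemma dec_disj : ∀ b ∈ TL, b ∉ SL := by decide +kernel

lemma dec_split : ∀ b ∈ TL, ∃ a ∈ SL, b - a ∈ SL := by decide +kernel

lemma dec_no_mix : ∀ b ∈ TL, ∀ a ∈ TL, b - a ∉ SL := by decide +kernel

lemma dec_neg : ∀ b ∈ SL, -b ∈ SL := by decide +kernel

/-- reflections act by integral combinations -/
lemma refl_int {α β : E 4} (ha : α ∈ F4) (hb : β ∈ F4) :
    ∃ n : ℤ, pairing β α = n ∧ reflRoot α β = β - n • α ∧ reflRoot α β ∈ F4 := by
  obtain ⟨a, ha', rfl⟩ := RL_of_F4 ha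
  obtain ⟨b, hb', rfl⟩ := RL_of_F4 hb
  obtain ⟨h0, h1, h2⟩ := dec_refl a ha' b hb'
  have hp : pairing (io b) (io a) = ((2 * qdot b a / qdot a a : ℤ) : ℝ) := by
    have h0' : (qdot a a : ℝ) ≠ 0 := by exact_mod_cast h0
    have h1' : (qdot a a : ℝ) * ((2 * qdot b a / qdot a a : ℤ) : ℝ) = 2 * (qdot b a : ℝ) := by
      exact_mod_cast h1
    rw [pairing, io_inner, io_inner]
    field_simp
    linarith
  have hr : reflRoot (io a) (io b) = io b - (2 * qdot b a / qdot a a) • io a := by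
    rw [reflRoot, hp, Int.cast_smul_eq_zsmul]
  refine ⟨_, hp, hr, ?_⟩
  rw [hr, ← io_zsmul, ← io_sub, F4_iff]
  exact h2

lemma neg_short {α : E 4} (h : α ∈ F4short) : -α ∈ F4short := by
  obtain ⟨a, ha', rfl⟩ := SL_of_short h
  rw [← io_neg]; exact short_of_SL (dec_neg a ha')

lemma short_pos {v δ : E 4} (hv : v ∈ F4short) (hd : δ ∈ F4) (h : 0 < ⟪v, δ⟫) :
    v = δ ∨ v - δ ∈ F4short := by
  obtain ⟨a, ha', rfl⟩ := SL_of_short hv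
  obtain ⟨d, hd', rfl⟩ := RL_of_F4 hd
  rw [io_inner] at h
  have h' : (0 : ℝ) < qdot a d := by linarith
  rcases dec_pos a ha' d hd' (by exact_mod_cast h') with h | h
  · left; rw [h]
  · right; rw [← io_sub]; exact short_of_SL h

lemma short_adj {α β : E 4} (ha : α ∈ F4short) (hb : β ∈ F4short) :
    ∃ γ ∈ F4short, (γ + α ∈ F4short ∨ γ - α ∈ F4short) ∧
      (β + γ ∈ F4short ∨ β - γ ∈ F4short) := by
  obtain ⟨a, ha', rfl⟩ := SL_of_short ha
  obtain ⟨b, hb', rfl⟩ := SL_of_short hb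
  obtain ⟨g, hg, h1, h2⟩ := dec_adj a ha' b hb'
  simp only [qadj, decide_eq_true_eq] at h1 h2
  refine ⟨io g, short_of_SL hg, ?_⟩
  simp only [← io_add, ← io_sub, short_iff]
  exact ⟨h1, h2⟩

lemma long_short {β : E 4} (hb : β ∈ longBC 4) : ∃ α ∈ F4short, β + α ∈ F4short := by
  obtain ⟨b, hb', rfl⟩ := TL_of_long hb
  obtain ⟨a, ha, h⟩ := dec_long_short b hb'
  exact ⟨io a, short_of_SL ha, by rw [← io_add]; exact short_of_SL h⟩

lemma long_split {β : E 4} (hb : β ∈ longBC 4) : ∃ α ∈ F4short, β - α ∈ F4short := by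
  obtain ⟨b, hb', rfl⟩ := TL_of_long hb
  obtain ⟨a, ha, h⟩ := dec_split b hb'
  exact ⟨io a, short_of_SL ha, by rw [← io_sub]; exact short_of_SL h⟩

lemma long_not_short {β : E 4} (hb : β ∈ longBC 4) : β ∉ F4short := by
  obtain ⟨b, hb', rfl⟩ := TL_of_long hb
  rw [short_iff]; exact dec_disj b hb'

lemma no_mix {α β : E 4} (hb : β ∈ longBC 4) (ha : α ∈ longBC 4) : β - α ∉ F4short := by
  obtain ⟨b, hb', rfl⟩ := TL_of_long hb
  obtain ⟨a, ha', rfl⟩ := TL_of_long ha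
  rw [← io_sub, short_iff]; exact dec_no_mix b hb' a ha'

lemma F4_closure {α : E 4} (h : α ∈ F4) : α ∈ AddSubgroup.closure F4short := by
  rcases h with h | h
  · exact AddSubgroup.subset_closure h
  · obtain ⟨β, hb, h2⟩ := long_split h
    have := add_mem (AddSubgroup.subset_closure h2) (AddSubgroup.subset_closure hb)
    simpa using this


/-! ### The data -/

/-- what we use of the extension datum -/
structure Dat (Λ : E 4 → Set Y) (Λs Λl : AddSubgroup Y) : Prop where
  hs : ∀ α ∈ F4short, Λ α = (Λs : Set Y)
  hl : ∀ α ∈ longBC 4, Λ α = (Λl : Set Y)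
  hls : Λl ≤ Λs
  two : ∀ y ∈ Λs, y + y ∈ Λl
  refl : ∀ a ∈ PhiRe F4 Λ, ∀ x ∈ PhiRe F4 Λ, reflAff a x ∈ PhiRe F4 Λ

lemma short_F4 {α : E 4} (h : α ∈ F4short) : α ∈ F4 := Or.inl h
lemma long_F4 {α : E 4} (h : α ∈ longBC 4) : α ∈ F4 := Or.inr h

lemma mkDat {Λ : E 4 → Set Y} {Λs Λl : AddSubgroup Y} (hED : IsExtensionDatum F4 Λ)
    (hs : ∀ α ∈ F4short, Λ α = (Λs : Set Y)) (hl : ∀ α ∈ longBC 4, Λ α = (Λl : Set Y))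
    (hls : Λl ≤ Λs) : Dat Λ Λs Λl := by
  refine ⟨hs, hl, hls, ?_, ?_⟩
  · intro y hy
    have hS : io (2, 0, 0, 0) ∈ F4short := short_of_SL (by decide)
    have hT : io (2, 2, 0, 0) ∈ longBC 4 := long_of_TL (by decide)
    have hT' : io (-2, 2, 0, 0) ∈ longBC 4 := long_of_TL (by decide)
    have hp : pairing (io (2, 2, 0, 0)) (io (2, 0, 0, 0)) = 2 := by
      rw [pairing, io_inner, io_inner]; norm_num [qdot]
    have hr : reflRoot (io (2, 0, 0, 0)) (io (2, 2, 0, 0)) = io (-2, 2, 0, 0) := by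
      rw [reflRoot, hp]
      ext i; fin_cases i <;> simp [io]; norm_num
    have h := hED.1 _ (short_F4 hS) _ (long_F4 hT) y (by rw [hs _ hS]; exact hy) 0
      (by rw [hl _ hT]; exact Λl.zero_mem)
    rw [hr, hp, hl _ hT', zero_sub, two_smul] at h
    simpa using Λl.neg_mem h
  · intro a ha x hx
    obtain ⟨n, hp, hr, hF⟩ := refl_int ha.1 hx.1
    exact ⟨hF, hED.1 _ ha.1 _ hx.1 _ ha.2 _ hx.2⟩

/-- `H` is a subgroup of index two between the two groups -/
structure Good (Λs Λl H : AddSubgroup Y) : Prop where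
  le : H ≤ Λs
  ge : Λl ≤ H
  add_iff : ∀ a ∈ Λs, ∀ b ∈ Λs, (a + b ∈ H ↔ (a ∈ H ↔ b ∈ H))
  ex : ∃ y ∈ Λs, y ∉ H

lemma mkGood {Λs Λl H : AddSubgroup Y} (le : H ≤ Λs) (ge : Λl ≤ H)
    (hi : (H.addSubgroupOf Λs).index = 2) : Good Λs Λl H := by
  refine ⟨le, ge, ?_, ?_⟩
  · intro a ha b hb
    have := AddSubgroup.add_mem_iff_of_index_two hi (a := ⟨a, ha⟩) (b := ⟨b, hb⟩)
    simpa [AddSubgroup.mem_addSubgroupOf] using this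
  · by_contra! h
    have : H.addSubgroupOf Λs = ⊤ := AddSubgroup.addSubgroupOf_eq_top.2 h
    rw [this] at hi
    simp at hi

lemma Good.sub_iff {Λs Λl H : AddSubgroup Y} (G : Good Λs Λl H) {a b : Y} (ha : a ∈ Λs)
    (hb : b ∈ Λs) : a - b ∈ H ↔ (a ∈ H ↔ b ∈ H) := by
  rw [sub_eq_add_neg, G.add_iff a ha _ (Λs.neg_mem hb), neg_mem_iff]

/-- a map linear on the group generated by the short roots -/
structure Lin (Λs : AddSubgroup Y) (T : E 4 → Y) : Prop where
  add : ∀ a ∈ AddSubgroup.closure F4short, ∀ b ∈ AddSubgroup.closure F4short,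
    T (a + b) = T a + T b
  neg : ∀ a ∈ AddSubgroup.closure F4short, T (-a) = - T a
  zsmul : ∀ a ∈ AddSubgroup.closure F4short, ∀ n : ℤ, T (n • a) = n • T a
  mem : ∀ a, T a ∈ Λs

open Classical in
/-- extension by zero -/
def extT (τ : AddSubgroup.closure F4short →+ Y) (v : E 4) : Y :=
  if h : v ∈ AddSubgroup.closure F4short then τ ⟨v, h⟩ else 0

lemma extT_eq (τ : AddSubgroup.closure F4short →+ Y) {v : E 4}
    (h : v ∈ AddSubgroup.closure F4short) : extT τ v = τ ⟨v, h⟩ := dif_pos h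

lemma extT_eps (τ : AddSubgroup.closure F4short →+ Y) (i : Fin 4) :
    extT τ (eps i) = τ (epsF4 i) := extT_eq τ _

lemma extT_lin {Λs : AddSubgroup Y} (τ : AddSubgroup.closure F4short →+ Y)
    (h : ∀ x, τ x ∈ Λs) : Lin Λs (extT τ) := by
  refine ⟨?_, ?_, ?_, ?_⟩
  · intro a ha b hb
    rw [extT_eq τ ha, extT_eq τ hb, extT_eq τ (add_mem ha hb), ← map_add]; rfl
  · intro a ha
    rw [extT_eq τ ha, extT_eq τ (neg_mem ha), ← map_neg]; rfl
  · intro a ha n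
    rw [extT_eq τ ha, extT_eq τ (zsmul_mem ha n), ← map_zsmul]; rfl
  · intro a
    unfold extT
    split_ifs
    · exact h _
    · exact Λs.zero_mem

/-- the candidate system -/
def Psi0 (Λ : E 4 → Set Y) (H : AddSubgroup Y) (T : E 4 → Y) : Set (E 4 × Y) :=
  {x | x ∈ PhiRe F4 Λ ∧ x.2 - T x.1 ∈ H}

section
variable {Λ : E 4 → Set Y} {Λs Λl H : AddSubgroup Y} {T : E 4 → Y}

lemma Dat.mem_short (D : Dat Λ Λs Λl) {α : E 4} (h : α ∈ F4short) {y : Y} :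
    (α, y) ∈ PhiRe F4 Λ ↔ y ∈ Λs := by
  simp only [PhiRe, Set.mem_ofPred_eq, D.hs α h, SetLike.mem_coe]
  exact ⟨fun h => h.2, fun hy => ⟨short_F4 h, hy⟩⟩

lemma Dat.mem_long (D : Dat Λ Λs Λl) {α : E 4} (h : α ∈ longBC 4) {y : Y} :
    (α, y) ∈ PhiRe F4 Λ ↔ y ∈ Λl := by
  simp only [PhiRe, Set.mem_ofPred_eq, D.hl α h, SetLike.mem_coe]
  exact ⟨fun h => h.2, fun hy => ⟨long_F4 h, hy⟩⟩

lemma Dat.grp (D : Dat Λ Λs Λl) {α : E 4} (h : α ∈ F4) :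
    ∃ S : AddSubgroup Y, Λl ≤ S ∧ S ≤ Λs ∧ ∀ y, (α, y) ∈ PhiRe F4 Λ ↔ y ∈ S := by
  rcases h with h | h
  · exact ⟨Λs, D.hls, le_rfl, fun y => D.mem_short h⟩
  · exact ⟨Λl, le_rfl, D.hls, fun y => D.mem_long h⟩

lemma Dat.mem_zero (D : Dat Λ Λs Λl) {α : E 4} (h : α ∈ F4) : (α, (0 : Y)) ∈ PhiRe F4 Λ := by
  obtain ⟨S, _, _, hS⟩ := D.grp h
  exact (hS 0).2 S.zero_mem

lemma Dat.mem_s (D : Dat Λ Λs Λl) {x : E 4 × Y} (h : x ∈ PhiRe F4 Λ) : x.2 ∈ Λs := by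
  obtain ⟨S, _, h2, hS⟩ := D.grp h.1
  exact h2 ((hS x.2).1 h)

lemma reflAff_int (a x : E 4 × Y) (ha : a.1 ∈ F4) (hx : x.1 ∈ F4) :
    ∃ n : ℤ, reflAff a x = (x.1 - n • a.1, x.2 - n • a.2) := by
  obtain ⟨n, hp, hr, -⟩ := refl_int ha hx
  refine ⟨n, ?_⟩
  rw [reflAff, hr, hp, Int.cast_smul_eq_zsmul]

lemma reflAff_self (a : E 4 × Y) (ha : a.1 ∈ F4) : reflAff a a = -a := by
  obtain ⟨c, hc, e⟩ := RL_of_F4 ha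
  have hne : ⟪a.1, a.1⟫ ≠ 0 := by
    rw [e, io_inner]
    have := (dec_refl c hc c hc).1
    have : (qdot c c : ℝ) ≠ 0 := by exact_mod_cast this
    positivity
  have hp : pairing a.1 a.1 = 2 := by rw [pairing]; field_simp
  rw [reflAff, reflRoot, hp]
  ext1 <;> simp <;> module

lemma Lin.eps0 : (eps (0 : Fin 4)) ∈ F4short := eps_mem_F4short 0

lemma psi0_short (D : Dat Λ Λs Λl) {α : E 4} (h : α ∈ F4short) {y : Y} :
    (α, y) ∈ Psi0 Λ H T ↔ y ∈ Λs ∧ y - T α ∈ H := by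
  simp only [Psi0, Set.mem_ofPred_eq, D.mem_short h]

lemma psi0_long (D : Dat Λ Λs Λl) (G : Good Λs Λl H) {α : E 4} (h : α ∈ longBC 4) {y : Y} :
    (α, y) ∈ Psi0 Λ H T ↔ y ∈ Λl ∧ T α ∈ H := by
  simp only [Psi0, Set.mem_ofPred_eq, D.mem_long h]
  refine and_congr_right fun hy => ?_
  exact ⟨fun h => by simpa using sub_mem (G.ge hy) h, fun h => sub_mem (G.ge hy) h⟩

lemma psi0_closed (D : Dat Λ Λs Λl) (G : Good Λs Λl H) (L : Lin Λs T) :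
    IsClosedSubSys (PhiRe F4 Λ) (Psi0 Λ H T) := by
  refine ⟨⟨⟨(eps 0, T (eps 0)), ?_⟩, fun x hx => hx.1, ?_, ?_⟩, ?_⟩
  · rw [psi0_short D Lin.eps0]
    exact ⟨L.mem _, by simp⟩
  · intro h
    obtain ⟨y, hy, hyH⟩ := G.ex
    have : (eps 0, T (eps 0) + y) ∈ Psi0 Λ H T := by
      rw [h, D.mem_short Lin.eps0]; exact add_mem (L.mem _) hy
    rw [psi0_short D Lin.eps0] at this
    exact hyH (by simpa using this.2)
  · intro a ha x hx
    refine ⟨D.refl a ha.1 x hx.1, ?_⟩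
    obtain ⟨n, e⟩ := reflAff_int a x ha.1.1 hx.1.1
    have h1 := F4_closure ha.1.1
    have h2 := F4_closure hx.1.1
    rw [e]
    simp only
    rw [sub_eq_add_neg x.1, L.add _ h2 _ (neg_mem (zsmul_mem h1 n)), L.neg _ (zsmul_mem h1 n),
      L.zsmul _ h1]
    have : x.2 - n • a.2 - (T x.1 + -(n • T a.1)) = (x.2 - T x.1) - n • (a.2 - T a.1) := by
      rw [smul_sub]; abel
    rw [this]
    exact sub_mem hx.2 (zsmul_mem ha.2 n)
  · intro x hx y hy hxy
    refine ⟨hxy, ?_⟩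
    rw [Prod.fst_add, Prod.snd_add, L.add _ (F4_closure hx.1.1) _ (F4_closure hy.1.1)]
    have : x.2 + y.2 - (T x.1 + T y.1) = (x.2 - T x.1) + (y.2 - T y.1) := by abel
    rw [this]
    exact add_mem hx.2 hy.2

lemma psi0_gr_short (D : Dat Λ Λs Λl) (L : Lin Λs T) {α : E 4} (h : α ∈ F4short) :
    α ∈ Gr (Psi0 Λ H T) := ⟨T α, (psi0_short D h).2 ⟨L.mem _, by simp⟩⟩

lemma psi0_gr_long (D : Dat Λ Λs Λl) (G : Good Λs Λl H) {α : E 4} (h : α ∈ longBC 4) :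
    α ∈ Gr (Psi0 Λ H T) ↔ T α ∈ H :=
  ⟨fun ⟨_, hy⟩ => ((psi0_long D G h).1 hy).2,
    fun hT => ⟨0, (psi0_long D G h).2 ⟨Λl.zero_mem, hT⟩⟩⟩

lemma psi0_semi (D : Dat Λ Λs Λl) (G : Good Λs Λl H) (L : Lin Λs T) {α β : E 4}
    (ha : α ∈ F4short) (hb : β ∈ F4short) (hab : α + β ∈ longBC 4) (hT : T (α + β) ∉ H) :
    IsSemiClosedSubRS F4 F4short (longBC 4) ∅ (Gr (Psi0 Λ H T)) := by
  have C := psi0_closed D G L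
  refine ⟨⟨⟨α, psi0_gr_short D L ha⟩, fun x ⟨y, hy⟩ => hy.1.1, ?_⟩, ?_, ?_⟩
  · rintro a ⟨y, hy⟩ b ⟨z, hz⟩
    exact ⟨_, C.1.2.2.2 _ hy _ hz⟩
  · intro h
    have := h α (psi0_gr_short D L ha) β (psi0_gr_short D L hb) (long_F4 hab)
    exact hT ((psi0_gr_long D G hab).1 this)
  · intro a ha b hb hab hn
    have haF : a ∈ F4 := by obtain ⟨y, hy⟩ := ha; exact hy.1.1
    have hbF : b ∈ F4 := by obtain ⟨y, hy⟩ := hb; exact hy.1.1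
    rcases hab with hab | hab
    · exact absurd (psi0_gr_short D L hab) hn
    rw [psi0_gr_long D G hab, L.add _ (F4_closure haF) _ (F4_closure hbF)] at hn
    left
    rcases haF with ha' | ha'
    · rcases hbF with hb' | hb'
      · exact ⟨ha', hb', Or.inl hab⟩
      · exfalso
        refine no_mix hab hb' ?_
        simpa using ha'
    · rcases hbF with hb' | hb'
      · exfalso
        refine no_mix hab ha' ?_
        simpa using hb'
      · exact absurd (add_mem ((psi0_gr_long D G ha').1 ha) ((psi0_gr_long D G hb').1 hb)) hn

/-- one step of the propagation in the proof of maximality -/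
lemma prop_step (D : Dat Λ Λs Λl) (G : Good Λs Λl H) (L : Lin Λs T) {Ψ' : Set (E 4 × Y)}
    (hc : IsClosedSubSys (PhiRe F4 Λ) Ψ') (hsub : Psi0 Λ H T ⊆ Ψ')
    {α β : E 4} (ha : α ∈ F4short) (hb : β ∈ F4short)
    (hadj : β + α ∈ F4short ∨ β - α ∈ F4short)
    (hy : ∃ y, (α, y) ∈ Ψ' ∧ y - T α ∉ H) : ∀ z ∈ Λs, (β, z) ∈ Ψ' := by
  have key : ∀ α ∈ F4short, β - α ∈ F4short → (∃ y, (α, y) ∈ Ψ' ∧ y - T α ∉ H) →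
      ∀ z ∈ Λs, (β, z) ∈ Ψ' := by
    rintro α ha hadj ⟨y, hy, hyH⟩ z hz
    have hys : y ∈ Λs := D.mem_s (hc.1.2.1 hy)
    by_cases hzH : z - T β ∈ H
    · exact hsub ((psi0_short D hb).2 ⟨hz, hzH⟩)
    · have h1 : (β - α, z - y) ∈ Ψ' := by
        refine hsub ((psi0_short D hadj).2 ⟨sub_mem hz hys, ?_⟩)
        have hac := F4_closure (short_F4 ha)
        have hbc := F4_closure (short_F4 hb)
        rw [sub_eq_add_neg β, L.add _ hbc _ (neg_mem hac), L.neg _ hac]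
        have e : z - y - (T β + - T α) = (z - T β) - (y - T α) := by abel
        rw [e, G.sub_iff (sub_mem hz (L.mem _)) (sub_mem hys (L.mem _))]
        tauto
      have h2 := hc.2 _ h1 _ hy (by simpa using (D.mem_short hb).2 hz)
      simpa using h2
  rcases hadj with h | h
  · refine key (-α) (neg_short ha) (by simpa using h) ?_
    obtain ⟨y, hy, hyH⟩ := hy
    refine ⟨-y, ?_, ?_⟩
    · have := hc.1.2.2.2 _ hy _ hy
      rw [reflAff_self _ (short_F4 ha)] at this
      exact this
    · rw [L.neg _ (F4_closure (short_F4 ha))]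
      rwa [neg_sub_neg, ← neg_sub, neg_mem_iff]
  · exact key α ha h hy

lemma psi0_max (D : Dat Λ Λs Λl) (G : Good Λs Λl H) (L : Lin Λs T) :
    IsMaxClosedSubSys (PhiRe F4 Λ) (Psi0 Λ H T) := by
  refine ⟨psi0_closed D G L, fun Ψ' hc hsub => ?_⟩
  by_contra hne
  obtain ⟨⟨α, y⟩, hx, hxn⟩ : ∃ x ∈ Ψ', x ∉ Psi0 Λ H T := by
    by_contra! h
    exact hne (Set.Subset.antisymm h hsub)
  have hR := hc.1.2.1 hx
  have hyH : y - T α ∉ H := fun h => hxn ⟨hR, h⟩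
  have hshort : ∃ α ∈ F4short, ∃ y, (α, y) ∈ Ψ' ∧ y - T α ∉ H := by
    rcases hR.1 with h | h
    · exact ⟨α, h, y, hx, hyH⟩
    · obtain ⟨β, hb, hab⟩ := long_short h
      refine ⟨α + β, hab, y + T β, ?_, ?_⟩
      · have h1 : (β, T β) ∈ Ψ' := hsub ((psi0_short D hb).2 ⟨L.mem _, by simp⟩)
        exact hc.2 _ hx _ h1 ((D.mem_short hab).2 (add_mem (D.mem_s hR) (L.mem _)))
      · rw [L.add _ (F4_closure hR.1) _ (F4_closure (short_F4 hb))]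
        simpa using hyH
  obtain ⟨α, ha, hy⟩ := hshort
  have hall : ∀ β ∈ F4short, ∀ z ∈ Λs, (β, z) ∈ Ψ' := by
    intro β hb
    obtain ⟨γ, hg, h1, h2⟩ := short_adj ha hb
    have h3 := prop_step D G L hc hsub ha hg h1 hy
    obtain ⟨y, hy, hyH⟩ := G.ex
    exact prop_step D G L hc hsub hg hb h2
      ⟨T γ + y, h3 _ (add_mem (L.mem _) hy), by simpa using hyH⟩
  refine hc.1.2.2.1 (Set.Subset.antisymm hc.1.2.1 ?_)
  rintro ⟨β, z⟩ hz
  rcases hz.1 with hb | hb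
  · exact hall β hb z (D.mem_s hz)
  · obtain ⟨α, ha, h2⟩ := long_split hb
    have := hc.2 _ (hall _ h2 z (D.mem_s hz)) _ (hall α ha 0 Λs.zero_mem) (by simpa using hz)
    simpa using this

lemma T_long (D : Dat Λ Λs Λl) (G : Good Λs Λl H) (L : Lin Λs T) (i j : Fin 4) (c d : ℝ)
    (hc : c = 1 ∨ c = -1) (hd : d = 1 ∨ d = -1) :
    T (c • eps i + d • eps j) ∈ H ↔ T (eps i) - T (eps j) ∈ H := by
  have hi := F4_closure (short_F4 (eps_mem_F4short i))
  have hj := F4_closure (short_F4 (eps_mem_F4short j))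
  rw [G.sub_iff (L.mem _) (L.mem _)]
  have h1 : ∀ i : Fin 4, ∀ c : ℝ, (c = 1 ∨ c = -1) →
      (c • eps i ∈ AddSubgroup.closure F4short ∧ (T (c • eps i) ∈ H ↔ T (eps i) ∈ H)) := by
    intro i c hc
    have hi := F4_closure (short_F4 (eps_mem_F4short i))
    rcases hc with rfl | rfl
    · simpa using hi
    · rw [neg_one_smul, L.neg _ hi, neg_mem_iff, neg_mem_iff]
      exact ⟨hi, Iff.rfl⟩
  rw [L.add _ (h1 i c hc).1 _ (h1 j d hd).1, G.add_iff _ (L.mem _) _ (L.mem _),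
    (h1 i c hc).2, (h1 j d hd).2]

lemma set_eq (D : Dat Λ Λs Λl) (G : Good Λs Λl H) (I : Finset (Fin 4))
    (τ : AddSubgroup.closure F4short →+ Y) (hτ : ∀ x, τ x ∈ Λs)
    (h1 : ∀ i j : Fin 4, ((i ∈ I ∧ j ∈ I) ∨ (i ∉ I ∧ j ∉ I)) → τ (epsF4 i) - τ (epsF4 j) ∈ H)
    (h2 : ∀ r s : Fin 4, r ∈ I → s ∉ I → τ (epsF4 r) - τ (epsF4 s) ∉ H) :
    Psi0 Λ H (extT τ) = {x | ∃ h : x.1 ∈ F4short,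
              x.2 ∈ Λs ∧ x.2 - τ ⟨x.1, AddSubgroup.subset_closure h⟩ ∈ H} ∪
            {x | (∃ i j : Fin 4, i ≠ j ∧ ((i ∈ I ∧ j ∈ I) ∨ (i ∉ I ∧ j ∉ I)) ∧
              ∃ c d : ℝ, (c = 1 ∨ c = -1) ∧ (d = 1 ∨ d = -1) ∧
                x.1 = c • eps i + d • eps j) ∧ x.2 ∈ Λl} := by
  have L := extT_lin τ hτ
  have hT : ∀ i j : Fin 4, ∀ c d : ℝ, (c = 1 ∨ c = -1) → (d = 1 ∨ d = -1) →
      (extT τ (c • eps i + d • eps j) ∈ H ↔ ((i ∈ I ∧ j ∈ I) ∨ (i ∉ I ∧ j ∉ I))) := by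
    intro i j c d hc hd
    rw [T_long D G L i j c d hc hd, extT_eps, extT_eps]
    refine ⟨fun h => ?_, h1 i j⟩
    by_cases hi : i ∈ I <;> by_cases hj : j ∈ I
    · exact Or.inl ⟨hi, hj⟩
    · exact absurd h (h2 i j hi hj)
    · refine absurd ?_ (h2 j i hj hi)
      rwa [← neg_sub, neg_mem_iff]
    · exact Or.inr ⟨hi, hj⟩
  ext ⟨α, y⟩
  simp only [Set.mem_union, Set.mem_ofPred_eq]
  constructor
  · intro h
    rcases h.1.1 with hs | hl
    · left
      have := (psi0_short D hs).1 h
      rw [extT_eq τ (AddSubgroup.subset_closure hs)] at this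
      exact ⟨hs, this⟩
    · right
      obtain ⟨h3, h4⟩ := (psi0_long D G hl).1 h
      obtain ⟨i, j, hij, c, d, hc, hd, rfl⟩ := hl
      exact ⟨⟨i, j, hij, (hT i j c d hc hd).1 h4, c, d, hc, hd, rfl⟩, h3⟩
  · rintro (⟨hs, h⟩ | ⟨⟨i, j, hij, hI, c, d, hc, hd, rfl⟩, hy⟩)
    · rw [psi0_short D hs, extT_eq τ (AddSubgroup.subset_closure hs)]
      exact h
    · rw [psi0_long D G ⟨i, j, hij, c, d, hc, hd, rfl⟩]
      exact ⟨hy, (hT i j c d hc hd).2 hI⟩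

end

/-! ### Existence of the index two subgroup and of the linear map -/

lemma exists_H (Λs K : AddSubgroup Y) (hK : K ≤ Λs) (h2 : ∀ y ∈ Λs, y + y ∈ K) {g : Y}
    (hg : g ∈ Λs) (hgK : g ∉ K) :
    ∃ H : AddSubgroup Y, K ≤ H ∧ H ≤ Λs ∧ g ∉ H ∧ (H.addSubgroupOf Λs).index = 2 := by
  let N := K.addSubgroupOf Λs
  have htwo : ∀ x : Λs ⧸ N, 2 • x = 0 := by
    intro x
    induction x using QuotientAddGroup.induction_on with
    | H z =>
      rw [← QuotientAddGroup.mk_nsmul, QuotientAddGroup.eq_zero_iff, two_nsmul]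
      exact h2 z z.2
  letI : Module (ZMod 2) (Λs ⧸ N) := AddCommGroup.zmodModule htwo
  have hne : (QuotientAddGroup.mk ⟨g, hg⟩ : Λs ⧸ N) ≠ 0 := by
    rw [Ne, QuotientAddGroup.eq_zero_iff]
    exact hgK
  obtain ⟨f, hf⟩ : ∃ f : Module.Dual (ZMod 2) (Λs ⧸ N), f (QuotientAddGroup.mk ⟨g, hg⟩) ≠ 0 := by
    by_contra! h
    exact hne ((Module.forall_dual_apply_eq_zero_iff (ZMod 2) _).1 h)
  let χ : Λs →+ ZMod 2 := f.toAddMonoidHom.comp (QuotientAddGroup.mk' N)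
  have hχ : ∀ z : Λs, χ z = f (QuotientAddGroup.mk z) := fun z => rfl
  have hsurj : Function.Surjective χ := by
    have h01 : ∀ a b : ZMod 2, a ≠ 0 → b = 0 ∨ b = a := by decide
    intro b
    rcases h01 _ b hf with h | h
    · exact ⟨0, by rw [map_zero, h]⟩
    · exact ⟨⟨g, hg⟩, by rw [hχ, h]⟩
  refine ⟨χ.ker.map Λs.subtype, ?_, ?_, ?_, ?_⟩
  · intro k hk
    refine ⟨⟨k, hK hk⟩, ?_, rfl⟩
    have : (QuotientAddGroup.mk ⟨k, hK hk⟩ : Λs ⧸ N) = 0 := by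
      rw [QuotientAddGroup.eq_zero_iff]; exact hk
    change χ _ = 0
    rw [hχ, this, map_zero]
  · rintro _ ⟨z, _, rfl⟩
    exact z.2
  · rintro ⟨z, hz, e⟩
    have : z = ⟨g, hg⟩ := Subtype.ext e
    subst this
    exact hf hz
  · have : (χ.ker.map Λs.subtype).addSubgroupOf Λs = χ.ker :=
      AddSubgroup.comap_map_eq_self_of_injective Λs.subtype_injective _
    rw [this, AddSubgroup.index_ker, AddMonoidHom.range_eq_top.2 hsurj]
    simp

/-- integral coordinates in the basis `ε₁, ε₂, ε₃, (ε₁+ε₂+ε₃+ε₄)/2` -/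
def qm (p : Q) : Q :=
  (2 * p.1 + p.2.2.2, 2 * p.2.1 + p.2.2.2, 2 * p.2.2.1 + p.2.2.2, p.2.2.2)

lemma qm_add (p q : Q) : qm (p + q) = qm p + qm q := by
  simp [qm]; refine ⟨?_, ?_, ?_⟩ <;> ring

lemma qm_neg (p : Q) : qm (-p) = -qm p := by
  simp [qm]; refine ⟨?_, ?_, ?_⟩ <;> ring

/-- the linear map in these coordinates -/
def qg (t0 t1 t2 th : Y) (p : Q) : Y :=
  p.1 • t0 + p.2.1 • t1 + p.2.2.1 • t2 + p.2.2.2 • th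

lemma qg_add (t0 t1 t2 th : Y) (p q : Q) :
    qg t0 t1 t2 th (p + q) = qg t0 t1 t2 th p + qg t0 t1 t2 th q := by
  simp [qg, add_smul]; abel

lemma qg_neg (t0 t1 t2 th : Y) (p : Q) : qg t0 t1 t2 th (-p) = -qg t0 t1 t2 th p := by
  simp [qg]; abel

/-- the twelve positive short roots in these coordinates -/
def PL : List Q := [(1, 0, 0, 0), (0, 1, 0, 0), (0, 0, 1, 0), (0, 0, 0, 1),
  (-1, 0, 0, 1), (0, -1, 0, 1), (0, 0, -1, 1), (-1, -1, 0, 1), (-1, 0, -1, 1), (0, -1, -1, 1),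
  (-1, -1, -1, 1), (-1, -1, -1, 2)]

lemma dec_PL : ∀ c ∈ SL, ∃ p ∈ PL, c = qm p ∨ c = -qm p := by decide +kernel

lemma closure_qm {v : E 4} (h : v ∈ AddSubgroup.closure F4short) : ∃ p, v = io (qm p) := by
  induction h using AddSubgroup.closure_induction with
  | mem x hx =>
    obtain ⟨c, hc, rfl⟩ := SL_of_short hx
    obtain ⟨p, -, rfl | rfl⟩ := dec_PL c hc
    · exact ⟨p, rfl⟩
    · exact ⟨-p, by rw [qm_neg]⟩
  | zero => exact ⟨0, by ext i; fin_cases i <;> simp [io, qm]⟩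
  | add x y _ _ hx hy =>
    obtain ⟨p, rfl⟩ := hx
    obtain ⟨q, rfl⟩ := hy
    exact ⟨p + q, by rw [qm_add, io_add]⟩
  | neg x _ hx =>
    obtain ⟨p, rfl⟩ := hx
    exact ⟨-p, by rw [qm_neg, io_neg]⟩

lemma qm_inj {p q : Q} (h : io (qm p) = io (qm q)) : p = q := by
  have := io_inj h
  obtain ⟨a, b, c, d⟩ := p
  obtain ⟨a', b', c', d'⟩ := q
  simp only [qm, Prod.mk.injEq] at this ⊢
  omega

lemma exists_tau (Λs : AddSubgroup Y) {t0 t1 t2 th : Y} (h0 : t0 ∈ Λs) (h1 : t1 ∈ Λs)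
    (h2 : t2 ∈ Λs) (hh : th ∈ Λs) :
    ∃ τ : AddSubgroup.closure F4short →+ Y, (∀ x, τ x ∈ Λs) ∧
      ∀ p : Q, ∀ h : io (qm p) ∈ AddSubgroup.closure F4short,
        τ ⟨io (qm p), h⟩ = qg t0 t1 t2 th p := by
  have hch : ∀ x : AddSubgroup.closure F4short, ∃ p, (x : E 4) = io (qm p) :=
    fun x => closure_qm x.2
  choose f hf using hch
  refine ⟨AddMonoidHom.mk' (fun x => qg t0 t1 t2 th (f x)) ?_, ?_, ?_⟩
  · intro x y
    rw [← qg_add]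
    congr 1
    apply qm_inj
    rw [← hf, qm_add, io_add, ← hf, ← hf]
    rfl
  · intro x
    exact add_mem (add_mem (add_mem (zsmul_mem h0 _) (zsmul_mem h1 _)) (zsmul_mem h2 _))
      (zsmul_mem hh _)
  · intro p h
    change qg t0 t1 t2 th (f _) = _
    congr 1
    apply qm_inj
    rw [← hf]

/-! ### From maximal systems to the candidate -/

section
variable {Λ : E 4 → Set Y} {Λs Λl : AddSubgroup Y} {Ψ : Set (E 4 × Y)}

lemma PL_mem (D : Dat Λ Λs Λl) (hc : IsClosedSubSys (PhiRe F4 Λ) Ψ) {t0 t1 t2 th : Y}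
    (h0 : (io (qm (1, 0, 0, 0)), t0) ∈ Ψ) (h1 : (io (qm (0, 1, 0, 0)), t1) ∈ Ψ)
    (h2 : (io (qm (0, 0, 1, 0)), t2) ∈ Ψ) (hh : (io (qm (0, 0, 0, 1)), th) ∈ Ψ) :
    ∀ c ∈ SL, ∃ p, c = qm p ∧ (io (qm p), qg t0 t1 t2 th p) ∈ Ψ := by
  let P : Q → Prop := fun p => (io (qm p), qg t0 t1 t2 th p) ∈ Ψ
  have neg : ∀ p, P p → P (-p) := by
    intro p hp
    have := hc.1.2.2.2 _ hp _ hp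
    rw [reflAff_self _ (hc.1.2.1 hp).1] at this
    change (io (qm (-p)), qg t0 t1 t2 th (-p)) ∈ Ψ
    rw [qm_neg, io_neg, qg_neg]
    exact this
  have sub : ∀ p q r, r = p - q → P p → P q → qm r ∈ SL → P r := by
    rintro p q r rfl hp hq hs
    have hq' := neg q hq
    have e : (io (qm (p - q)), qg t0 t1 t2 th (p - q)) =
        (io (qm p), qg t0 t1 t2 th p) + (io (qm (-q)), qg t0 t1 t2 th (-q)) := by
      rw [sub_eq_add_neg, qm_add, qg_add, io_add]; rfl
    change _ ∈ Ψ
    rw [e]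
    refine hc.2 _ hp _ hq' ?_
    rw [← e, D.mem_short (short_of_SL hs), sub_eq_add_neg, qg_add]
    exact add_mem (D.mem_s (hc.1.2.1 hp)) (D.mem_s (hc.1.2.1 hq'))
  have k0 : P (1, 0, 0, 0) := by simpa [P, qg] using h0
  have k1 : P (0, 1, 0, 0) := by simpa [P, qg] using h1
  have k2 : P (0, 0, 1, 0) := by simpa [P, qg] using h2
  have kh : P (0, 0, 0, 1) := by simpa [P, qg] using hh
  have a0 : P (-1, 0, 0, 1) := sub _ _ _ (by decide) kh k0 (by decide)
  have a1 : P (0, -1, 0, 1) := sub _ _ _ (by decide) kh k1 (by decide)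
  have a2 : P (0, 0, -1, 1) := sub _ _ _ (by decide) kh k2 (by decide)
  have b0 : P (-1, -1, 0, 1) := sub _ _ _ (by decide) a0 k1 (by decide)
  have b1 : P (-1, 0, -1, 1) := sub _ _ _ (by decide) a0 k2 (by decide)
  have b2 : P (0, -1, -1, 1) := sub _ _ _ (by decide) a1 k2 (by decide)
  have c : P (-1, -1, -1, 1) := sub _ _ _ (by decide) b0 k2 (by decide)
  have d : P (-1, -1, -1, 2) := sub _ _ _ (by decide) c (neg _ kh) (by decide)
  have all : ∀ p ∈ PL, P p := by
    intro p hp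
    simp only [PL, List.mem_cons, List.not_mem_nil, or_false] at hp
    rcases hp with rfl | rfl | rfl | rfl | rfl | rfl | rfl | rfl | rfl | rfl | rfl | rfl <;>
      assumption
  intro q hq
  obtain ⟨p, hp, rfl | rfl⟩ := dec_PL q hq
  · exact ⟨p, rfl, all p hp⟩
  · exact ⟨-p, by rw [qm_neg], neg _ (all p hp)⟩

/-- stability under translations by the long group -/
lemma stable (D : Dat Λ Λs Λl) (hm : IsMaxClosedSubSys (PhiRe F4 Λ) Ψ) {γ : E 4}
    (hg : γ ∈ F4) (hgn : γ ∉ Gr Ψ) {x : E 4 × Y} (hx : x ∈ Ψ) {l : Y} (hl : l ∈ Λl) :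
    (x.1, x.2 + l) ∈ Ψ := by
  obtain ⟨⟨⟨hne, hsub, hpr, hrefl⟩, hcl⟩, hmax⟩ := hm
  let Ψ' : Set (E 4 × Y) := {x | ∃ l ∈ Λl, (x.1, x.2 - l) ∈ Ψ}
  have hin : Ψ ⊆ Ψ' := fun x hx => ⟨0, Λl.zero_mem, by simpa using hx⟩
  have hsub' : Ψ' ⊆ PhiRe F4 Λ := by
    rintro x ⟨l, hl, h⟩
    have h' := hsub h
    obtain ⟨S, hS1, _, hS⟩ := D.grp h'.1
    have := add_mem ((hS _).1 h') (hS1 hl)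
    exact (hS _).2 (by simpa using this)
  have hΨ' : IsClosedSubSys (PhiRe F4 Λ) Ψ' := by
    refine ⟨⟨hne.mono hin, hsub', ?_, ?_⟩, ?_⟩
    · intro h
      have : (γ, (0 : Y)) ∈ Ψ' := by rw [h]; exact D.mem_zero hg
      obtain ⟨l, _, h⟩ := this
      exact hgn ⟨_, h⟩
    · rintro a ⟨l, hl, ha⟩ x ⟨m, hm, hx⟩
      obtain ⟨n, hp, hr, -⟩ := refl_int (hsub ha).1 (hsub hx).1
      refine ⟨m - n • l, sub_mem hm (zsmul_mem hl n), ?_⟩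
      have := hrefl _ ha _ hx
      have hp' : pairing x.1 a.1 = (n : ℝ) := hp
      simp only [reflAff, hp', Int.cast_smul_eq_zsmul] at this ⊢
      convert this using 2
      rw [smul_sub]; abel
    · rintro x ⟨l, hl, hx⟩ y ⟨m, hm, hy⟩ hxy
      refine ⟨l + m, add_mem hl hm, ?_⟩
      have e : ((x + y).1, (x + y).2 - (l + m)) = (x.1, x.2 - l) + (y.1, y.2 - m) := by
        simp only [Prod.fst_add, Prod.snd_add, Prod.mk_add_mk]
        congr 1; abel
      rw [e]
      refine hcl _ hx _ hy ?_
      rw [← e]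
      obtain ⟨S, hS1, _, hS⟩ := D.grp hxy.1
      exact (hS _).2 (sub_mem ((hS _).1 hxy) (hS1 (add_mem hl hm)))
  rw [← hmax Ψ' hΨ' hin]
  exact ⟨l, hl, by simpa using hx⟩

/-- the gradient is not contained in a proper closed subsystem -/
lemma gr_gen (D : Dat Λ Λs Λl) (hm : IsMaxClosedSubSys (PhiRe F4 Λ) Ψ)
    (hnc : ¬ (∀ α ∈ Gr Ψ, ∀ β ∈ Gr Ψ, α + β ∈ F4 → α + β ∈ Gr Ψ)) :
    ∀ α ∈ F4, α ∈ AddSubgroup.closure (Gr Ψ) := by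
  obtain ⟨⟨⟨hne, hsub, hpr, hrefl⟩, hcl⟩, hmax⟩ := hm
  let Ψ' : Set (E 4 × Y) := {x | x ∈ PhiRe F4 Λ ∧ x.1 ∈ AddSubgroup.closure (Gr Ψ)}
  have hin : Ψ ⊆ Ψ' := fun x hx => ⟨hsub hx, AddSubgroup.subset_closure ⟨x.2, hx⟩⟩
  by_cases h : Ψ' = PhiRe F4 Λ
  · intro α ha
    have : (α, (0 : Y)) ∈ Ψ' := by rw [h]; exact D.mem_zero ha
    exact this.2
  · exfalso
    have hc : IsClosedSubSys (PhiRe F4 Λ) Ψ' := by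
      refine ⟨⟨hne.mono hin, fun x hx => hx.1, h, ?_⟩, ?_⟩
      · intro a ha x hx
        refine ⟨D.refl a ha.1 x hx.1, ?_⟩
        obtain ⟨n, e⟩ := reflAff_int a x ha.1.1 hx.1.1
        rw [e]
        exact sub_mem hx.2 (zsmul_mem ha.2 n)
      · intro x hx y hy hxy
        exact ⟨hxy, add_mem hx.2 hy.2⟩
    apply hnc
    intro α ha β hb hab
    refine ⟨0, ?_⟩
    rw [← hmax Ψ' hc hin]
    exact ⟨D.mem_zero hab,
      add_mem (AddSubgroup.subset_closure ha) (AddSubgroup.subset_closure hb)⟩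

/-- a short sum of elements of a semi-closed system lies in it -/
lemma semi_sum {Δ : Set (E 4)} (hs : IsSemiClosedSubRS F4 F4short (longBC 4) ∅ Δ) :
    ∀ (n : ℕ) (s : Multiset (E 4)), s.card = n → (∀ x ∈ s, x ∈ Δ) → s.sum ∈ F4short →
      s.sum ∈ Δ := by
  intro n
  induction n with
  | zero =>
    intro s hn _ hsum
    rw [Multiset.card_eq_zero] at hn
    subst hn
    exfalso
    obtain ⟨c, hc, e⟩ := SL_of_short hsum
    have h0 : (0 : E 4) = io 0 := by ext i; fin_cases i <;> simp [io]
    rw [Multiset.sum_zero, h0] at e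
    rw [← io_inj e] at hc
    revert hc; decide
  | succ n ih =>
    intro s hn hΔ hsum
    have hpos : ∃ δ ∈ s, 0 < ⟪s.sum, δ⟫ := by
      by_contra! h
      have h1 : ∀ t : Multiset (E 4), (∀ x ∈ t, ⟪s.sum, x⟫ ≤ 0) → ⟪s.sum, t.sum⟫ ≤ 0 := by
        intro t
        induction t using Multiset.induction_on with
        | empty => simp
        | cons a t iht =>
          intro ht
          rw [Multiset.sum_cons, inner_add_right]
          have := ht a (Multiset.mem_cons_self a t)
          have := iht fun x hx => ht x (Multiset.mem_cons_of_mem hx)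
          linarith
      have h2 := h1 s h
      have h3 : s.sum = 0 := real_inner_self_nonpos.1 h2
      obtain ⟨c, hc, e⟩ := SL_of_short hsum
      have h0 : (0 : E 4) = io 0 := by ext i; fin_cases i <;> simp [io]
      rw [h3, h0] at e
      rw [← io_inj e] at hc
      revert hc; decide
    obtain ⟨δ, hδ, hp⟩ := hpos
    obtain ⟨t, rfl⟩ := Multiset.exists_cons_of_mem hδ
    have hδF : δ ∈ F4 := hs.1.2.1 (hΔ δ hδ)
    have hsum' := hsum
    rcases short_pos hsum hδF hp with h | h
    · rw [h]; exact hΔ δ hδ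
    · rw [Multiset.sum_cons] at h hsum ⊢
      rw [add_sub_cancel_left] at h
      have ht := ih t (by simpa using hn) (fun x hx => hΔ x (Multiset.mem_cons_of_mem hx)) h
      by_contra hcon
      rcases hs.2.2 _ (hΔ δ hδ) _ ht (short_F4 hsum) hcon with ⟨-, -, hl⟩ | ⟨-, -, hl⟩
      · rw [Set.union_empty] at hl
        exact long_not_short hl hsum
      · exact hl

lemma gr_short (D : Dat Λ Λs Λl) (hm : IsMaxClosedSubSys (PhiRe F4 Λ) Ψ)
    (hs : IsSemiClosedSubRS F4 F4short (longBC 4) ∅ (Gr Ψ)) :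
    ∀ α ∈ F4short, α ∈ Gr Ψ := by
  intro α ha
  have h := gr_gen D hm hs.2.1 α (short_F4 ha)
  have neg : ∀ x ∈ Gr Ψ, -x ∈ Gr Ψ := by
    rintro x ⟨y, h⟩
    have := hm.1.1.2.2.2 _ h _ h
    rw [reflAff_self _ (hm.1.1.2.1 h).1] at this
    exact ⟨-y, this⟩
  have hex : ∃ s : Multiset (E 4), (∀ x ∈ s, x ∈ Gr Ψ) ∧ s.sum = α := by
    clear ha
    induction h using AddSubgroup.closure_induction with
    | mem x hx => exact ⟨{x}, by simpa using hx, by simp⟩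
    | zero => exact ⟨0, by simp, by simp⟩
    | add x y _ _ hx hy =>
      obtain ⟨s, hs1, rfl⟩ := hx
      obtain ⟨t, ht1, rfl⟩ := hy
      refine ⟨s + t, ?_, by simp⟩
      intro x hx
      rcases Multiset.mem_add.1 hx with h | h
      · exact hs1 x h
      · exact ht1 x h
    | neg x _ hx =>
      obtain ⟨s, hs1, rfl⟩ := hx
      refine ⟨s.map fun x => -x, ?_, Multiset.sum_map_neg' s⟩
      intro x hx
      obtain ⟨y, hy, rfl⟩ := Multiset.mem_map.1 hx
      exact neg y (hs1 y hy)
  obtain ⟨s, hs1, rfl⟩ := hex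
  exact semi_sum hs _ s rfl hs1 ha

lemma shift_step (D : Dat Λ Λs Λl) (hc : IsClosedSubSys (PhiRe F4 Λ) Ψ) {α β : E 4}
    (hb : β ∈ F4short) (hadj : β + α ∈ F4short ∨ β - α ∈ F4short)
    {y y' z : Y} (hy : (α, y) ∈ Ψ) (hy' : (α, y') ∈ Ψ) (hz : (β, z) ∈ Ψ) :
    (β, z + (y - y')) ∈ Ψ := by
  have neg : ∀ {x}, x ∈ Ψ → -x ∈ Ψ := by
    intro x hx
    have := hc.1.2.2.2 _ hx _ hx
    rwa [reflAff_self _ (hc.1.2.1 hx).1] at this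
  have my := D.mem_s (hc.1.2.1 hy)
  have my' := D.mem_s (hc.1.2.1 hy')
  have mz := D.mem_s (hc.1.2.1 hz)
  simp only at my my' mz
  have fin : (β, z + (y - y')) ∈ PhiRe F4 Λ := (D.mem_short hb).2 (add_mem mz (sub_mem my my'))
  rcases hadj with h | h
  · have h1 : (β + α, z + y) ∈ Ψ := hc.2 _ hz _ hy ((D.mem_short h).2 (add_mem mz my))
    have e : (β, z + (y - y')) = (β + α, z + y) + -(α, y') := by
      ext1 <;> simp; abel
    rw [e]
    exact hc.2 _ h1 _ (neg hy') (by rw [← e]; exact fin)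
  · have h1 : (β - α, z - y') ∈ Ψ := by
      have e : (β - α, z - y') = (β, z) + -(α, y') := by ext1 <;> simp [sub_eq_add_neg]
      rw [e]
      exact hc.2 _ hz _ (neg hy') (by rw [← e]; exact (D.mem_short h).2 (sub_mem mz my'))
    have e : (β, z + (y - y')) = (β - α, z - y') + (α, y) := by
      ext1 <;> simp; abel
    rw [e]
    exact hc.2 _ h1 _ hy (by rw [← e]; exact fin)

lemma dec_card : ∀ b : Fin 4 → Bool, ((b 0 = b 1) ↔ (b 2 = b 3)) →
    (∃ i j, b i ≠ b j) → (Finset.univ.filter fun i => b i = true).card = 2 := by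
  decide

lemma forward_s11 (D : Dat Λ Λs Λl) (hm : IsMaxClosedSubSys (PhiRe F4 Λ) Ψ)
    (hs : IsSemiClosedSubRS F4 F4short (longBC 4) ∅ (Gr Ψ)) :
    ∃ (H : AddSubgroup Y) (τ : AddSubgroup.closure F4short →+ Y) (i j : Fin 4),
      H ≤ Λs ∧ (H.addSubgroupOf Λs).index = 2 ∧ Λl ≤ H ∧ (∀ x, τ x ∈ Λs) ∧
      Ψ = Psi0 Λ H (extT τ) ∧ τ (epsF4 i) - τ (epsF4 j) ∉ H := by
  have hgr := gr_short D hm hs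
  have hc := hm.1
  have neg : ∀ {x}, x ∈ Ψ → -x ∈ Ψ := by
    intro x hx
    have := hc.1.2.2.2 _ hx _ hx
    rwa [reflAff_self _ (hc.1.2.1 hx).1] at this
  have hnc := hs.2.1
  push Not at hnc
  obtain ⟨α, ha, β, hb, hab, habn⟩ := hnc
  have hcase : α ∈ F4short ∧ β ∈ F4short ∧ α + β ∈ longBC 4 := by
    rcases hs.2.2 α ha β hb hab habn with h | h
    · simpa using h
    · exact absurd h.2.2 (by simp)
  obtain ⟨has, hbs, habl⟩ := hcase
  have hst : ∀ {v : E 4} {y : Y}, (v, y) ∈ Ψ → ∀ l ∈ Λl, (v, y + l) ∈ Ψ :=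
    fun hx l hl => stable D hm hab habn hx hl
  -- the linear map
  obtain ⟨t0, h0⟩ := hgr (io (qm (1, 0, 0, 0))) (short_of_SL (by decide))
  obtain ⟨t1, h1⟩ := hgr (io (qm (0, 1, 0, 0))) (short_of_SL (by decide))
  obtain ⟨t2, h2⟩ := hgr (io (qm (0, 0, 1, 0))) (short_of_SL (by decide))
  obtain ⟨th, hh⟩ := hgr (io (qm (0, 0, 0, 1))) (short_of_SL (by decide))
  obtain ⟨τ, hτ, hτp⟩ := exists_tau Λs (D.mem_s (hc.1.2.1 h0)) (D.mem_s (hc.1.2.1 h1))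
    (D.mem_s (hc.1.2.1 h2)) (D.mem_s (hc.1.2.1 hh))
  have L := extT_lin τ hτ
  have hT : ∀ v ∈ F4short, (v, extT τ v) ∈ Ψ := by
    intro v hv
    have hv' := F4_closure (short_F4 hv)
    obtain ⟨c, hcS, rfl⟩ := SL_of_short hv
    obtain ⟨p, rfl, hp⟩ := PL_mem D hc h0 h1 h2 hh c hcS
    rw [extT_eq τ hv', hτp]
    exact hp
  -- the translation group
  let K : AddSubgroup Y :=
    { carrier := {k | ∀ v ∈ F4short, ∀ y, (v, y) ∈ Ψ → (v, y + k) ∈ Ψ}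
      zero_mem' := by intro v _ y h; simpa using h
      add_mem' := by
        intro a b ha hb v hv y h
        rw [← add_assoc]
        exact hb v hv _ (ha v hv y h)
      neg_mem' := by
        intro a ha v hv y h
        have h1 := neg (ha (-v) (neg_short hv) (-y) (neg h))
        have e : -(-v, -y + a) = (v, y + -a) := by ext1 <;> simp [add_comm]
        rwa [e] at h1 }
  have hKmem : ∀ k, k ∈ K ↔ ∀ v ∈ F4short, ∀ y, (v, y) ∈ Ψ → (v, y + k) ∈ Ψ := fun k => Iff.rfl
  have hlK : Λl ≤ K := fun l hl v hv y h => hst h l hl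
  have hKs : K ≤ Λs := by
    intro k hk
    have h := hk _ has _ (hT α has)
    have := sub_mem (D.mem_s (hc.1.2.1 h)) (L.mem α)
    simpa using this
  have hdiff : ∀ v ∈ F4short, ∀ y y', (v, y) ∈ Ψ → (v, y') ∈ Ψ → y - y' ∈ K := by
    intro v hv y y' hy hy' w hw z hz
    obtain ⟨g, hg, k1, k2⟩ := short_adj hv hw
    have k3 := shift_step D hc hg k1 hy hy' (hT g hg)
    have k4 := shift_step D hc hw k2 k3 (hT g hg) hz
    simpa using k4
  have hac := F4_closure (short_F4 has)
  have hbc := F4_closure (short_F4 hbs)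
  have hnot : extT τ (α + β) ∉ K := by
    intro h
    have h1 := (K.neg_mem h) β hbs _ (hT β hbs)
    rw [L.add _ hac _ hbc] at h1
    have h2 := hc.2 _ (hT α has) _ h1
    have e : (α, extT τ α) + (β, extT τ β + -(extT τ α + extT τ β)) = (α + β, (0 : Y)) := by
      ext1 <;> simp
    rw [e] at h2
    exact habn ⟨0, h2 (D.mem_zero hab)⟩
  obtain ⟨H, hKH, hHs, hgH, hidx⟩ := exists_H Λs K hKs (fun y hy => hlK (D.two y hy))
    (L.mem _) hnot
  have G := mkGood hHs (hlK.trans hKH) hidx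
  have hsubset : Ψ ⊆ Psi0 Λ H (extT τ) := by
    rintro ⟨v, y⟩ hx
    have hR := hc.1.2.1 hx
    refine ⟨hR, hKH ?_⟩
    rcases hR.1 with hv | hv
    · exact hdiff v hv _ _ hx (hT v hv)
    · obtain ⟨w, hw, hvw⟩ := long_short hv
      have h1 : (v + w, y + extT τ w) ∈ Ψ :=
        hc.2 _ hx _ (hT w hw) ((D.mem_short hvw).2 (add_mem (D.mem_s hR) (L.mem _)))
      have h2 := hdiff _ hvw _ _ h1 (hT _ hvw)
      rw [L.add _ (F4_closure hR.1) _ (F4_closure (short_F4 hw))] at h2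
      simpa using h2
  obtain ⟨i, j, hij, c, d, hc', hd', e⟩ := habl
  refine ⟨H, τ, i, j, hHs, hidx, hlK.trans hKH, hτ,
    (hm.2 _ (psi0_closed D G L) hsubset).symm, ?_⟩
  rw [e, T_long D G L i j c d hc' hd', extT_eps, extT_eps] at hgH
  exact hgH

end

/-- Theorem 4.2 (type `F₄`): maximal closed subroot systems with semi-closed
gradient.  The ℤ-linear map `τ : Φ̊_s → Λ_s/H` is encoded by a lift
`τ : ⟨Φ̊_s⟩ →+ Y` with values in `Λ_s`. -/
theorem statement11 {Y : Type*} [AddCommGroup Y] [Module ℝ Y] [FiniteDimensional ℝ Y]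
    (Λ : E 4 → Set Y) (Λs Λl : AddSubgroup Y)
    (hED : IsExtensionDatum F4 Λ)
    (hs : ∀ α ∈ F4short, Λ α = (Λs : Set Y)) (hl : ∀ α ∈ longBC 4, Λ α = (Λl : Set Y))
    (hls : Λl ≤ Λs)
    (Ψ : Set (E 4 × Y)) :
    (IsMaxClosedSubSys (PhiRe F4 Λ) Ψ ∧
        IsSemiClosedSubRS F4 F4short (longBC 4) ∅ (Gr Ψ)) ↔
      ∃ (H : AddSubgroup Y) (I : Finset (Fin 4)) (τ : AddSubgroup.closure F4short →+ Y),
        H ≤ Λs ∧ (H.addSubgroupOf Λs).index = 2 ∧ Λl ≤ H ∧ I.card = 2 ∧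
        (∀ x, τ x ∈ Λs) ∧
        (∀ i j : Fin 4, ((i ∈ I ∧ j ∈ I) ∨ (i ∉ I ∧ j ∉ I)) →
          τ (epsF4 i) - τ (epsF4 j) ∈ H) ∧
        (∀ r s : Fin 4, r ∈ I → s ∉ I → τ (epsF4 r) - τ (epsF4 s) ∉ H) ∧
        Ψ = {x | ∃ h : x.1 ∈ F4short,
              x.2 ∈ Λs ∧ x.2 - τ ⟨x.1, AddSubgroup.subset_closure h⟩ ∈ H} ∪
            {x | (∃ i j : Fin 4, i ≠ j ∧ ((i ∈ I ∧ j ∈ I) ∨ (i ∉ I ∧ j ∉ I)) ∧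
              ∃ c d : ℝ, (c = 1 ∨ c = -1) ∧ (d = 1 ∨ d = -1) ∧
                x.1 = c • eps i + d • eps j) ∧ x.2 ∈ Λl} := by
  have D := mkDat hED hs hl hls
  constructor
  · rintro ⟨hm, hsemi⟩
    obtain ⟨H, τ, i, j, hHs, hidx, hlH, hτ, hΨ, hij⟩ := forward_s11 D hm hsemi
    have G := mkGood hHs hlH hidx
    classical
    let b : Fin 4 → Bool := fun i => decide (τ (epsF4 i) ∈ H)
    have hbi : ∀ i j, b i = b j ↔ τ (epsF4 i) - τ (epsF4 j) ∈ H := by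
      intro i j
      rw [G.sub_iff (hτ _) (hτ _)]
      simp [b]
    let I : Finset (Fin 4) := Finset.univ.filter fun i => b i = true
    have hI : ∀ i, i ∈ I ↔ b i = true := by intro i; simp [I]
    have h1 : ∀ i j : Fin 4, ((i ∈ I ∧ j ∈ I) ∨ (i ∉ I ∧ j ∉ I)) →
        τ (epsF4 i) - τ (epsF4 j) ∈ H := by
      intro i j h
      rw [hI, hI] at h
      rw [← hbi]
      rcases h with h | h
      · rw [h.1, h.2]
      · rw [Bool.eq_false_of_not_eq_true h.1, Bool.eq_false_of_not_eq_true h.2]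
    have h2 : ∀ r s : Fin 4, r ∈ I → s ∉ I → τ (epsF4 r) - τ (epsF4 s) ∉ H := by
      intro r s hr hs'
      rw [hI] at hr hs'
      rw [← hbi, hr]
      exact fun h => hs' h.symm
    have hcard : I.card = 2 := by
      apply dec_card b
      · have hhs : io (1, 1, 1, 1) ∈ F4short := short_of_SL (by decide)
        let x : AddSubgroup.closure F4short := ⟨io (1, 1, 1, 1), AddSubgroup.subset_closure hhs⟩
        have e : (epsF4 0 + epsF4 1) + (epsF4 2 + epsF4 3) = x + x := by
          apply Subtype.ext
          change (eps 0 + eps 1) + (eps 2 + eps 3) = io (1, 1, 1, 1) + io (1, 1, 1, 1)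
          simp only [← io_qe, ← io_add]
          rfl
        have hsum : (τ (epsF4 0) + τ (epsF4 1)) + (τ (epsF4 2) + τ (epsF4 3)) ∈ H := by
          rw [← map_add, ← map_add, ← map_add, e, map_add]
          exact hlH (D.two _ (hτ _))
        rw [G.add_iff _ (add_mem (hτ _) (hτ _)) _ (add_mem (hτ _) (hτ _)),
          G.add_iff _ (hτ _) _ (hτ _), G.add_iff _ (hτ _) _ (hτ _)] at hsum
        rw [hbi, hbi, G.sub_iff (hτ _) (hτ _), G.sub_iff (hτ _) (hτ _)]
        exact hsum
      · exact ⟨i, j, by rw [Ne, hbi]; exact hij⟩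
    refine ⟨H, I, τ, hHs, hidx, hlH, hcard, hτ, h1, h2, ?_⟩
    rw [hΨ]
    exact set_eq D G I τ hτ h1 h2
  · rintro ⟨H, I, τ, hHs, hidx, hlH, hcard, hτ, h1, h2, hΨ⟩
    have G := mkGood hHs hlH hidx
    have L := extT_lin τ hτ
    rw [← set_eq D G I τ hτ h1 h2] at hΨ
    subst hΨ
    refine ⟨psi0_max D G L, ?_⟩
    obtain ⟨r, hr⟩ : ∃ r, r ∈ I := Finset.card_pos.1 (by omega)
    obtain ⟨s, hs'⟩ : ∃ s, s ∉ I := by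
      by_contra! h
      have : I = Finset.univ := Finset.eq_univ_iff_forall.2 h
      rw [this] at hcard
      simp at hcard
    have hrs := h2 r s hr hs'
    have hne : r ≠ s := by rintro rfl; exact hs' hr
    have hT : extT τ (eps r + eps s) ∉ H := by
      have := T_long D G L r s 1 1 (Or.inl rfl) (Or.inl rfl)
      rw [one_smul, one_smul, extT_eps, extT_eps] at this
      rwa [this]
    exact psi0_semi D G L (eps_mem_F4short r) (eps_mem_F4short s)
      ⟨r, s, hne, 1, 1, Or.inl rfl, Or.inl rfl, by simp⟩ hT

end BdS
end
end
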